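/- Let p, q, a, b, c be positive integers and let s be a complex number with Re(s) > 1. Then S_{SO(6)}(p,q,a,b,c,s) = (1/2)(J₀ + J₂), where J₀ := 2(−1)^p Σ_{j=0}^{⌊p/2⌋} ζ(2j) Σ_{ω=0}^{p−2j} C(ω+a−1,ω) C(p+c−2j−ω−1,c−1) T(q+a+ω, s, p+b+c−2j−ω; 1, 1) + 2(−1)^{p+a} Σ_{j=0}^{⌊c/2⌋} ζ(2j) Σ_{ω=0}^{c−2j} C(ω+a−1,ω) C(p+c−2j−ω−1,p−1) T(q, s+a+ω, p+b+c−2j−ω; 1, 1) + 2(−1)^p Σ_{j=0}^{⌊a/2⌋} ζ(2j) Σ_{ω=0}^{p−1} C(ω+a−2j,ω) C(p+c−2−ω,c−1) T(q+a−2j+ω+1, s, p+b+c−1−ω; 1, 1) + 2(−1)^{p+a} Σ_{j=0}^{⌊a/2⌋} ζ(2j) Σ_{ω=0}^{c−1} C(ω+a−2j,ω) C(p+c−2−ω,p−1) T(q, s+a−2j+ω+1, p+b+c−1−ω; 1, 1), and J₂ is the same expression with every coefficient ζ(2j) replaced by φ(2j) and with the sign arguments of T in the four successive terms replaced by (1,−1),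 (−1,1), (−1,−1), (−1,−1) respectively; here C(n,k) denotes the binomial coefficient. -/

import Mathlib

open Complex Finset

/-- `φ(s) = (2^{1-s} - 1) ζ(s)` (with the convention `φ(1) = -log 2`). -/
noncomputable def phi (s : ℂ) : ℂ :=
  if s = 1 then -(Real.log 2 : ℂ) else ((2 : ℂ) ^ ((1 : ℂ) - s) - 1) * riemannZeta s

/-- `T(p,s,q;x,y) = Σ_{l ≠ 0, m ≥ 1, l+m ≠ 0} x^l y^m / (l^p m^s (l+m)^q)`. -/
noncomputable def T (p : ℕ) (s : ℂ) (q : ℕ) (x y : ℂ) : ℂ :=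
  ∑' lm : ℤ × ℕ,
    if lm.1 ≠ 0 ∧ lm.1 + ((lm.2 : ℤ) + 1) ≠ 0 then
      x ^ lm.1 * y ^ (lm.2 + 1) /
        ((lm.1 : ℂ) ^ p * (((lm.2 + 1 : ℕ) : ℂ)) ^ s *
          (((lm.1 + (lm.2 : ℤ) + 1 : ℤ) : ℂ)) ^ q)
    else 0

/-- Generic triple zeta-sum of type `A₃` with a weight `w` on `(l,m,n)`. -/
noncomputable def Z3 (w : ℕ → ℕ → ℕ → ℂ) (s₁ s₂ s₃ s₄ s₅ s₆ : ℂ) : ℂ :=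
  ∑' t : ℕ × ℕ × ℕ,
    w (t.1 + 1) (t.2.1 + 1) (t.2.2 + 1) /
      ((((t.1 + 1 : ℕ) : ℂ)) ^ s₁ * (((t.2.1 + 1 : ℕ) : ℂ)) ^ s₂ *
        (((t.2.2 + 1 : ℕ) : ℂ)) ^ s₃ * (((t.1 + 1 + (t.2.1 + 1) : ℕ) : ℂ)) ^ s₄ *
        (((t.2.1 + 1 + (t.2.2 + 1) : ℕ) : ℂ)) ^ s₅ *
        (((t.1 + 1 + (t.2.1 + 1) + (t.2.2 + 1) : ℕ) : ℂ)) ^ s₆)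

/-- `ζ₃(s₁,…,s₆;SO(6))`: the sum is restricted to `l ≡ n (mod 2)`. -/
noncomputable def ZSO6 : ℂ → ℂ → ℂ → ℂ → ℂ → ℂ → ℂ :=
  Z3 (fun l _ n => if l % 2 = n % 2 then 1 else 0)

/-- The twelve-term alternating combination `S` built from a six-variable zeta `Z`. -/
noncomputable def Scomb (Z : ℂ → ℂ → ℂ → ℂ → ℂ → ℂ → ℂ) (p q a b c : ℕ) (s : ℂ) : ℂ :=
  Z p q s a b c + (-1 : ℂ) ^ p * Z p a s q c b + (-1 : ℂ) ^ (p + a) * Z q a c p s b +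
    (-1 : ℂ) ^ (p + a + c) * Z q s c b a p + (-1 : ℂ) ^ q * Z a q b p s c +
    (-1 : ℂ) ^ (q + b) * Z a s b c q p + (-1 : ℂ) ^ (q + a) * Z a p b q c s +
    (-1 : ℂ) ^ (q + a + b) * Z a c b s p q + (-1 : ℂ) ^ (q + a + b + c) * Z s c p a b q +
    (-1 : ℂ) ^ (p + q + a) * Z q p c a b s + (-1 : ℂ) ^ (p + q + a + c) * Z q b c s p a +
    (-1 : ℂ) ^ (p + q + a + b + c) * Z s b p q c a

/-- The right-hand side `J₀` (from the functional relation for `ζ₃(·;A₃)`). -/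
noncomputable def J0 (p q a b c : ℕ) (s : ℂ) : ℂ :=
  2 * (-1 : ℂ) ^ p * ∑ j ∈ range (p / 2 + 1), riemannZeta (2 * j) *
      ∑ ω ∈ range (p - 2 * j + 1),
        (Nat.choose (ω + a - 1) ω : ℂ) * (Nat.choose (p + c - 2 * j - ω - 1) (c - 1) : ℂ) *
          T (q + a + ω) s (p + b + c - 2 * j - ω) 1 1 +
  2 * (-1 : ℂ) ^ (p + a) * ∑ j ∈ range (c / 2 + 1), riemannZeta (2 * j) *
      ∑ ω ∈ range (c - 2 * j + 1),
        (Nat.choose (ω + a - 1) ω : ℂ) * (Nat.choose (p + c - 2 * j - ω - 1) (p - 1) : ℂ) *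
          T q (s + a + ω) (p + b + c - 2 * j - ω) 1 1 +
  2 * (-1 : ℂ) ^ p * ∑ j ∈ range (a / 2 + 1), riemannZeta (2 * j) *
      ∑ ω ∈ range p,
        (Nat.choose (ω + a - 2 * j) ω : ℂ) * (Nat.choose (p + c - 2 - ω) (c - 1) : ℂ) *
          T (q + a - 2 * j + ω + 1) s (p + b + c - 1 - ω) 1 1 +
  2 * (-1 : ℂ) ^ (p + a) * ∑ j ∈ range (a / 2 + 1), riemannZeta (2 * j) *
      ∑ ω ∈ range c,
        (Nat.choose (ω + a - 2 * j) ω : ℂ) * (Nat.choose (p + c - 2 - ω) (p - 1) : ℂ) *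
          T q (s + ((a - 2 * j : ℕ) : ℂ) + ω + 1) (p + b + c - 1 - ω) 1 1

/-- The right-hand side `J₂` (from the functional relation for `ζ₃(·,λ₂∨;SU(4))`). -/
noncomputable def J2 (p q a b c : ℕ) (s : ℂ) : ℂ :=
  2 * (-1 : ℂ) ^ p * ∑ j ∈ range (p / 2 + 1), phi (2 * j) *
      ∑ ω ∈ range (p - 2 * j + 1),
        (Nat.choose (ω + a - 1) ω : ℂ) * (Nat.choose (p + c - 2 * j - ω - 1) (c - 1) : ℂ) *
          T (q + a + ω) s (p + b + c - 2 * j - ω) 1 (-1) +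
  2 * (-1 : ℂ) ^ (p + a) * ∑ j ∈ range (c / 2 + 1), phi (2 * j) *
      ∑ ω ∈ range (c - 2 * j + 1),
        (Nat.choose (ω + a - 1) ω : ℂ) * (Nat.choose (p + c - 2 * j - ω - 1) (p - 1) : ℂ) *
          T q (s + a + ω) (p + b + c - 2 * j - ω) (-1) 1 +
  2 * (-1 : ℂ) ^ p * ∑ j ∈ range (a / 2 + 1), phi (2 * j) *
      ∑ ω ∈ range p,
        (Nat.choose (ω + a - 2 * j) ω : ℂ) * (Nat.choose (p + c - 2 - ω) (c - 1) : ℂ) *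
          T (q + a - 2 * j + ω + 1) s (p + b + c - 1 - ω) (-1) (-1) +
  2 * (-1 : ℂ) ^ (p + a) * ∑ j ∈ range (a / 2 + 1), phi (2 * j) *
      ∑ ω ∈ range c,
        (Nat.choose (ω + a - 2 * j) ω : ℂ) * (Nat.choose (p + c - 2 - ω) (p - 1) : ℂ) *
          T q (s + ((a - 2 * j : ℕ) : ℂ) + ω + 1) (p + b + c - 1 - ω) (-1) (-1)


section core
open PowerSeries Filter Topology

noncomputable def Pinv (β : ℂ) : PowerSeries ℂ := (X + C β)⁻¹

lemma Pinv_mul {β : ℂ} (h : β ≠ 0) : Pinv β * (X + C β) = 1 := by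
  unfold Pinv
  apply PowerSeries.inv_mul_cancel
  simpa using h

noncomputable def Cs (κ : ℕ → ℂ) : PowerSeries ℂ :=
  PowerSeries.mk (fun i => if Even i then 2 * κ (i / 2) else 0)

noncomputable def fr (x : ℂ) (κ : ℕ → ℂ) (α₁ α₂ α₃ : ℤ) (k₁ k₂ k₃ : ℕ) : ℂ :=
  x ^ α₁ * coeff k₁ (Cs κ * Pinv ((α₁ : ℂ) - α₂) ^ k₂ * Pinv ((α₁ : ℂ) - α₃) ^ k₃)

noncomputable def RR (x : ℂ) (κ : ℕ → ℂ) (α₁ α₂ α₃ : ℤ) (k₁ k₂ k₃ : ℕ) : ℂ :=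
  fr x κ α₁ α₂ α₃ k₁ k₂ k₃ + fr x κ α₂ α₁ α₃ k₂ k₁ k₃ + fr x κ α₃ α₁ α₂ k₃ k₁ k₂

noncomputable def tm (x : ℂ) (α₁ α₂ α₃ : ℤ) (k₁ k₂ k₃ : ℕ) (l : ℤ) : ℂ :=
  if l = α₁ ∨ l = α₂ ∨ l = α₃ then 0 else
    x ^ l / (((l : ℂ) - α₁) ^ k₁ * ((l : ℂ) - α₂) ^ k₂ * ((l : ℂ) - α₃) ^ k₃)

lemma fr_swap (x : ℂ) (κ : ℕ → ℂ) (α₁ α₂ α₃ : ℤ) (k₁ k₂ k₃ : ℕ) :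
    fr x κ α₁ α₂ α₃ k₁ k₂ k₃ = fr x κ α₁ α₃ α₂ k₁ k₃ k₂ := by
  unfold fr; rw [mul_right_comm]

lemma RR_swap12 (x : ℂ) (κ : ℕ → ℂ) (α₁ α₂ α₃ : ℤ) (k₁ k₂ k₃ : ℕ) :
    RR x κ α₁ α₂ α₃ k₁ k₂ k₃ = RR x κ α₂ α₁ α₃ k₂ k₁ k₃ := by
  unfold RR; rw [fr_swap x κ α₃]; ring

lemma RR_swap23 (x : ℂ) (κ : ℕ → ℂ) (α₁ α₂ α₃ : ℤ) (k₁ k₂ k₃ : ℕ) :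
    RR x κ α₁ α₂ α₃ k₁ k₂ k₃ = RR x κ α₁ α₃ α₂ k₁ k₃ k₂ := by
  unfold RR; rw [fr_swap x κ α₁]; ring

lemma tm_swap12 (x : ℂ) (α₁ α₂ α₃ : ℤ) (k₁ k₂ k₃ : ℕ) :
    tm x α₁ α₂ α₃ k₁ k₂ k₃ = tm x α₂ α₁ α₃ k₂ k₁ k₃ := by
  funext l
  unfold tm
  have : (l = α₁ ∨ l = α₂ ∨ l = α₃) ↔ (l = α₂ ∨ l = α₁ ∨ l = α₃) := by tauto
  simp only [this]
  congr 2; ring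

lemma tm_swap23 (x : ℂ) (α₁ α₂ α₃ : ℤ) (k₁ k₂ k₃ : ℕ) :
    tm x α₁ α₂ α₃ k₁ k₂ k₃ = tm x α₁ α₃ α₂ k₁ k₃ k₂ := by
  funext l
  unfold tm
  have : (l = α₁ ∨ l = α₂ ∨ l = α₃) ↔ (l = α₁ ∨ l = α₃ ∨ l = α₂) := by tauto
  simp only [this]
  congr 2; ring

/-- first type recurrence -/
lemma fr_rec_a (x : ℂ) (κ : ℕ → ℂ) (α₁ α₂ α₃ : ℤ) (h12 : α₁ ≠ α₂) (k₁ k₂ k₃ : ℕ) :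
    ((α₁ : ℂ) - α₂) * fr x κ α₁ α₂ α₃ (k₁ + 1) (k₂ + 1) k₃ =
      fr x κ α₁ α₂ α₃ (k₁ + 1) k₂ k₃ - fr x κ α₁ α₂ α₃ k₁ (k₂ + 1) k₃ := by
  unfold fr
  have hβ : (α₁ : ℂ) - α₂ ≠ 0 := sub_ne_zero.mpr (by exact_mod_cast h12)
  set β := (α₁ : ℂ) - α₂
  have h := Pinv_mul hβ
  set Q := Pinv ((α₁ : ℂ) - α₃) ^ k₃
  have e : C β * (Cs κ * Pinv β ^ (k₂ + 1) * Q) =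
      Cs κ * Pinv β ^ k₂ * Q - (Cs κ * Pinv β ^ (k₂ + 1) * Q) * X := by
    linear_combination (Cs κ * Pinv β ^ k₂ * Q) * h
  have e2 := congrArg (coeff (k₁ + 1)) e
  rw [coeff_C_mul, map_sub, coeff_succ_mul_X] at e2
  linear_combination x ^ α₁ * e2

lemma fr_rec_b (x : ℂ) (κ : ℕ → ℂ) (α₁ α₂ α₃ : ℤ) (h12 : α₃ ≠ α₂) (h31 : α₃ ≠ α₁)
    (k₁ k₂ k₃ : ℕ) :
    ((α₁ : ℂ) - α₂) * fr x κ α₃ α₁ α₂ k₃ (k₁ + 1) (k₂ + 1) =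
      fr x κ α₃ α₁ α₂ k₃ (k₁ + 1) k₂ - fr x κ α₃ α₁ α₂ k₃ k₁ (k₂ + 1) := by
  unfold fr
  have hβ : (α₃ : ℂ) - α₁ ≠ 0 := sub_ne_zero.mpr (by exact_mod_cast h31)
  have hγ : (α₃ : ℂ) - α₂ ≠ 0 := sub_ne_zero.mpr (by exact_mod_cast h12)
  have hd : (α₁ : ℂ) - α₂ = (α₃ - α₂) - (α₃ - α₁) := by ring
  rw [hd]
  set β := (α₃ : ℂ) - α₁
  set γ := (α₃ : ℂ) - α₂
  have h := Pinv_mul hβ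
  have h' := Pinv_mul hγ
  have e : C (γ - β) * (Cs κ * Pinv β ^ (k₁ + 1) * Pinv γ ^ (k₂ + 1)) =
      Cs κ * Pinv β ^ (k₁ + 1) * Pinv γ ^ k₂ - Cs κ * Pinv β ^ k₁ * Pinv γ ^ (k₂ + 1) := by
    rw [map_sub]
    linear_combination (Cs κ * Pinv β ^ (k₁+1) * Pinv γ ^ k₂) * h' -
      (Cs κ * Pinv β ^ k₁ * Pinv γ ^ (k₂+1)) * h
  have e2 := congrArg (coeff k₃) e
  rw [coeff_C_mul, map_sub] at e2
  linear_combination x ^ α₃ * e2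

lemma RR_rec (x : ℂ) (κ : ℕ → ℂ) (α₁ α₂ α₃ : ℤ) (h12 : α₁ ≠ α₂) (h13 : α₁ ≠ α₃) (h23 : α₂ ≠ α₃)
    (k₁ k₂ k₃ : ℕ) :
    ((α₁ : ℂ) - α₂) * RR x κ α₁ α₂ α₃ (k₁ + 1) (k₂ + 1) k₃ =
      RR x κ α₁ α₂ α₃ (k₁ + 1) k₂ k₃ - RR x κ α₁ α₂ α₃ k₁ (k₂ + 1) k₃ := by
  unfold RR
  have a := fr_rec_a x κ α₁ α₂ α₃ h12 k₁ k₂ k₃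
  have b := fr_rec_a x κ α₂ α₁ α₃ h12.symm k₂ k₁ k₃
  have c := fr_rec_b x κ α₁ α₂ α₃ h23.symm h13.symm k₁ k₂ k₃
  linear_combination a - b + c

lemma tm_rec (x : ℂ) (α₁ α₂ α₃ : ℤ) (k₁ k₂ k₃ : ℕ) (l : ℤ) :
    ((α₁ : ℂ) - α₂) * tm x α₁ α₂ α₃ (k₁ + 1) (k₂ + 1) k₃ l =
      tm x α₁ α₂ α₃ (k₁ + 1) k₂ k₃ l - tm x α₁ α₂ α₃ k₁ (k₂ + 1) k₃ l := by
  unfold tm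
  split_ifs with h
  · simp
  · push Not at h
    obtain ⟨h1, h2, h3⟩ := h
    have e1 : (l : ℂ) - α₁ ≠ 0 := sub_ne_zero.mpr (by exact_mod_cast h1)
    have e2 : (l : ℂ) - α₂ ≠ 0 := sub_ne_zero.mpr (by exact_mod_cast h2)
    have e3 : (l : ℂ) - α₃ ≠ 0 := sub_ne_zero.mpr (by exact_mod_cast h3)
    have hd : (α₁ : ℂ) - α₂ = (l - α₂) - (l - α₁) := by ring
    rw [hd]
    generalize (l : ℂ) - α₁ = A at *
    generalize (l : ℂ) - α₂ = B at *
    generalize (l : ℂ) - α₃ = D at *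
    field_simp
    ring

/-- the values of the symmetric sums -/
lemma sym_sum (f : ℤ → ℂ) (K : ℕ) : ∑ l ∈ Icc (-(K : ℤ)) K, f l =
    f 0 + ∑ n ∈ range K, (f ((n : ℤ) + 1) + f (-((n : ℤ) + 1))) := by
  induction K with
  | zero => simp
  | succ K ih =>
    rw [sum_range_succ, ← add_assoc, ← ih]
    have : Icc (-((K + 1 : ℕ) : ℤ)) ((K + 1 : ℕ) : ℤ) =
        insert ((K : ℤ) + 1) (insert (-((K : ℤ) + 1)) (Icc (-(K : ℤ)) K)) := by
      ext z; simp only [mem_insert, mem_Icc]; omega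
    rw [this, sum_insert, sum_insert]
    · ring
    · simp
    · simp; omega

lemma shift_sum (f : ℤ → ℂ) (L : ℂ) (hf : Tendsto f cofinite (𝓝 0))
    (h : Tendsto (fun K : ℕ => ∑ l ∈ Icc (-(K : ℤ)) K, f l) atTop (𝓝 L)) (α : ℤ) :
    Tendsto (fun K : ℕ => ∑ l ∈ Icc (-(K : ℤ)) K, f (l - α)) atTop (𝓝 L) := by
  have step : ∀ (α : ℤ), Tendsto (fun K : ℕ => ∑ l ∈ Icc (-(K : ℤ)) K, f (l - (α + 1)) -
      ∑ l ∈ Icc (-(K : ℤ)) K, f (l - α)) atTop (𝓝 0) := by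
    intro α
    have e : ∀ K : ℕ, ∑ l ∈ Icc (-(K : ℤ)) K, f (l - (α + 1)) -
      ∑ l ∈ Icc (-(K : ℤ)) K, f (l - α) = f (-(K : ℤ) - (α + 1)) - f (K - α) := by
      intro K
      have h1 : ∑ l ∈ Icc (-(K : ℤ)) K, f (l - (α + 1)) =
          ∑ l ∈ Icc (-(K : ℤ) - 1) (K - 1), f (l - α) := by
        refine sum_bij (fun l _ => l - 1) ?_ ?_ ?_ ?_
        · intro a ha; simp only [mem_Icc] at *; omega
        · intro a _ b _ hab; omega
        · intro b hb; refine ⟨b + 1, ?_, by ring⟩; simp only [mem_Icc] at *; omega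
        · intro a _; congr 1; ring
      have h2 : insert (K : ℤ) (Icc (-(K : ℤ) - 1) (K - 1)) =
          insert (-(K : ℤ) - 1) (Icc (-(K : ℤ)) K) := by
        ext z; simp only [mem_insert, mem_Icc]; omega
      have h3 := congrArg (fun s => ∑ l ∈ s, f (l - α)) h2
      rw [sum_insert (by simp), sum_insert (by simp)] at h3
      have h4 : -(K : ℤ) - (α + 1) = -K - 1 - α := by ring
      rw [h1, h4]
      linear_combination h3
    simp only [e]
    have i1 : Function.Injective (fun K : ℕ => -(K : ℤ) - (α + 1)) := by
      intro a b; simp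
    have i2 : Function.Injective (fun K : ℕ => (K : ℤ) - α) := by
      intro a b; simp
    have t1 := hf.comp (i1.tendsto_cofinite)
    have t2 := hf.comp (i2.tendsto_cofinite)
    rw [Nat.cofinite_eq_atTop] at t1 t2
    simpa using t1.sub t2
  induction α using Int.induction_on with
  | zero => simpa using h
  | succ i ih => simpa using (step i).add ih
  | pred i ih =>
    have := step (-(i : ℤ) - 1)
    simp only [sub_add_cancel] at this
    simpa using ih.sub this

structure Good (x : ℂ) (κ : ℕ → ℂ) : Prop where
  hx : x = 1 ∨ x = -1
  h0 : κ 0 = -1 / 2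
  hk : ∀ j : ℕ, 1 ≤ j → HasSum (fun n : ℕ => x ^ (n + 1) / ((n : ℂ) + 1) ^ (2 * j)) (κ j)

lemma Good.ne {x : ℂ} {κ : ℕ → ℂ} (h : Good x κ) : x ≠ 0 := by
  rcases h.hx with h | h <;> rw [h] <;> norm_num

lemma Good.norm_zpow {x : ℂ} {κ : ℕ → ℂ} (h : Good x κ) (l : ℤ) : ‖x ^ l‖ = 1 := by
  rw [_root_.norm_zpow]
  rcases h.hx with h | h <;> simp [h]

lemma Good.zpow_neg {x : ℂ} {κ : ℕ → ℂ} (h : Good x κ) (l : ℤ) : x ^ (-l) = x ^ l := by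
  rcases h.hx with h | h <;> simp [h]
  rw [← inv_zpow]; norm_num

lemma base_sum {x : ℂ} {κ : ℕ → ℂ} (h : Good x κ) (k : ℕ) (hk : 1 ≤ k) :
    Tendsto (fun K : ℕ => ∑ l ∈ Icc (-(K : ℤ)) K, x ^ l / (l : ℂ) ^ k) atTop
      (𝓝 (coeff k (Cs κ))) := by
  simp only [sym_sum]
  have h0 : ((0 : ℤ) : ℂ) ^ k = 0 := by simp; omega
  simp only [h0, div_zero, zero_add, h.zpow_neg]
  unfold Cs
  rw [coeff_mk]
  split_ifs with hev
  · obtain ⟨j, rfl⟩ := hev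
    have hj : (j + j) / 2 = j := by omega
    rw [hj]
    have := ((h.hk j (by omega)).mul_left 2).tendsto_sum_nat
    refine this.congr ?_
    intro K
    refine sum_congr rfl fun n _ => ?_
    push_cast
    rw [← two_mul, Even.neg_pow (by simp)]
    have : x ^ ((n : ℤ) + 1) = x ^ (n + 1) := by exact_mod_cast zpow_natCast x (n + 1)
    rw [this]; ring
  · rw [Nat.not_even_iff_odd] at hev
    have : ∀ n : ℕ, x ^ ((n : ℤ) + 1) / (((n : ℤ) + 1 : ℤ) : ℂ) ^ k +
      x ^ ((n : ℤ) + 1) / ((-((n : ℤ) + 1) : ℤ) : ℂ) ^ k = 0 := by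
      intro n; push_cast; rw [hev.neg_pow, div_neg]; ring
    simp only [this, sum_const_zero]
    exact tendsto_const_nhds

lemma tendsto_zero_aux {x : ℂ} {κ : ℕ → ℂ} (h : Good x κ) (k : ℕ) (hk : 1 ≤ k) :
    Tendsto (fun l : ℤ => x ^ l / (l : ℂ) ^ k) cofinite (𝓝 0) := by
  rw [tendsto_zero_iff_norm_tendsto_zero]
  have h1 : Tendsto (fun l : ℤ => (‖(l : ℝ)‖)⁻¹) cofinite (𝓝 0) :=
    tendsto_inv_atTop_zero.comp (by
      have := tendsto_norm_cocompact_atTop (E := ℝ)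
      exact this.comp (Int.tendsto_coe_cofinite))
  refine squeeze_zero (fun _ => norm_nonneg _) ?_ h1
  intro l
  rw [norm_div, h.norm_zpow, norm_pow, one_div, Complex.norm_intCast]
  rcases eq_or_ne l 0 with rfl | hl
  · have : k ≠ 0 := by omega
    simp [this]
  · have : (1 : ℝ) ≤ |(l : ℝ)| := by exact_mod_cast Int.one_le_abs hl
    rw [Real.norm_eq_abs]
    gcongr
    exact le_self_pow₀ this (by omega)

lemma base_case {x : ℂ} {κ : ℕ → ℂ} (h : Good x κ) (α₁ α₂ α₃ : ℤ) (h12 : α₁ ≠ α₂)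
    (h13 : α₁ ≠ α₃) (h23 : α₂ ≠ α₃) (k : ℕ) (hk : 1 ≤ k) :
    Tendsto (fun K : ℕ => ∑ l ∈ Icc (-(K : ℤ)) K, tm x α₁ α₂ α₃ k 0 0 l) atTop
      (𝓝 (RR x κ α₁ α₂ α₃ k 0 0)) := by
  set g : ℤ → ℂ := fun l => x ^ (l - α₁) / ((l - α₁ : ℤ) : ℂ) ^ k with hg
  have hs : Tendsto (fun K : ℕ => ∑ l ∈ Icc (-(K : ℤ)) K, g l) atTop (𝓝 (coeff k (Cs κ))) :=
    shift_sum _ _ (tendsto_zero_aux h k hk) (base_sum h k hk) α₁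
  have hR : RR x κ α₁ α₂ α₃ k 0 0 = x ^ α₁ * (coeff k (Cs κ) - g α₂ - g α₃) := by
    have hc : coeff 0 (Cs κ) = -1 := by unfold Cs; rw [coeff_mk]; simp [h.h0]; norm_num
    have cP : ∀ β : ℂ, constantCoeff (Pinv β) = β⁻¹ := by
      intro β; unfold Pinv; rw [constantCoeff_inv]; simp
    have hc' : constantCoeff (Cs κ) = -1 := by simpa using hc
    unfold RR fr
    simp only [pow_zero, mul_one, coeff_zero_eq_constantCoeff, map_mul, map_pow, cP, hc', hg]
    rw [zpow_sub₀ h.ne, zpow_sub₀ h.ne]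
    have := zpow_ne_zero α₁ h.ne
    have n2 : (α₂ : ℂ) - α₁ ≠ 0 := sub_ne_zero.mpr (by exact_mod_cast h12.symm)
    have n3 : (α₃ : ℂ) - α₁ ≠ 0 := sub_ne_zero.mpr (by exact_mod_cast h13.symm)
    push_cast
    generalize (α₂ : ℂ) - α₁ = A at *
    generalize (α₃ : ℂ) - α₁ = B at *
    simp only [inv_pow]
    field_simp
    ring
  rw [hR]
  refine ((hs.sub_const _).sub_const _ |>.const_mul _).congr' ?_
  filter_upwards [eventually_ge_atTop (α₂.natAbs + α₃.natAbs)] with K hK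
  have m2 : α₂ ∈ Icc (-(K : ℤ)) K := by rw [mem_Icc]; omega
  have m3 : α₃ ∈ Icc (-(K : ℤ)) K := by rw [mem_Icc]; omega
  have e : ∀ l, tm x α₁ α₂ α₃ k 0 0 l = x ^ α₁ * (g l - (if l = α₂ then g α₂ else 0) -
      (if l = α₃ then g α₃ else 0)) := by
    intro l
    unfold tm
    by_cases l1 : l = α₁
    · subst l1
      simp [h12, h13, hg]; omega
    by_cases l2 : l = α₂
    · subst l2; simp [h23]
    by_cases l3 : l = α₃
    · subst l3; simp [h23.symm]
    simp only [l1, l2, l3, or_self, if_false, hg]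
    rw [zpow_sub₀ h.ne]
    have := zpow_ne_zero α₁ h.ne
    have n2 : (l : ℂ) - α₁ ≠ 0 := sub_ne_zero.mpr (by exact_mod_cast l1)
    push_cast
    field_simp
    ring
  simp only [e, ← mul_sum, sum_sub_distrib, sum_ite_eq', m2, m3, if_true]

lemma core_lim {x : ℂ} {κ : ℕ → ℂ} (h : Good x κ) (N : ℕ) : ∀ (α₁ α₂ α₃ : ℤ) (_ : α₁ ≠ α₂)
    (_ : α₁ ≠ α₃) (_ : α₂ ≠ α₃) (k₁ k₂ k₃ : ℕ) (_ : 1 ≤ k₁ + k₂ + k₃) (_ : k₁ + k₂ + k₃ ≤ N),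
    Tendsto (fun K : ℕ => ∑ l ∈ Icc (-(K : ℤ)) K, tm x α₁ α₂ α₃ k₁ k₂ k₃ l) atTop
      (𝓝 (RR x κ α₁ α₂ α₃ k₁ k₂ k₃)) := by
  induction N with
  | zero => intros; omega
  | succ N ih =>
    have step : ∀ (α₁ α₂ α₃ : ℤ) (_ : α₁ ≠ α₂)
        (_ : α₁ ≠ α₃) (_ : α₂ ≠ α₃) (k₁ k₂ k₃ : ℕ) (_ : 1 ≤ k₁) (_ : 1 ≤ k₂)
        (_ : k₁ + k₂ + k₃ ≤ N + 1),
        Tendsto (fun K : ℕ => ∑ l ∈ Icc (-(K : ℤ)) K, tm x α₁ α₂ α₃ k₁ k₂ k₃ l) atTop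
          (𝓝 (RR x κ α₁ α₂ α₃ k₁ k₂ k₃)) := by
      intro α₁ α₂ α₃ h12 h13 h23 k₁ k₂ k₃ hk1 hk2 hk
      obtain ⟨k₁, rfl⟩ := Nat.exists_eq_add_of_le' hk1
      obtain ⟨k₂, rfl⟩ := Nat.exists_eq_add_of_le' hk2
      have hβ : (α₁ : ℂ) - α₂ ≠ 0 := sub_ne_zero.mpr (by exact_mod_cast h12)
      have t1 := ih α₁ α₂ α₃ h12 h13 h23 (k₁ + 1) k₂ k₃ (by omega) (by omega)
      have t2 := ih α₁ α₂ α₃ h12 h13 h23 k₁ (k₂ + 1) k₃ (by omega) (by omega)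
      have t3 := (t1.sub t2).const_mul ((α₁ : ℂ) - α₂)⁻¹
      rw [← RR_rec x κ α₁ α₂ α₃ h12 h13 h23, inv_mul_cancel_left₀ hβ] at t3
      refine t3.congr fun K => ?_
      rw [← sum_sub_distrib, mul_sum]
      refine sum_congr rfl fun l _ => ?_
      rw [← tm_rec, inv_mul_cancel_left₀ hβ]
    intro α₁ α₂ α₃ h12 h13 h23 k₁ k₂ k₃ hk1 hk
    rcases Nat.eq_zero_or_pos k₁ with z1 | p1 <;> rcases Nat.eq_zero_or_pos k₂ with z2 | p2 <;>
      rcases Nat.eq_zero_or_pos k₃ with z3 | p3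
    · omega
    · subst z1 z2
      rw [tm_swap23, RR_swap23, tm_swap12, RR_swap12]
      exact base_case h _ _ _ h13.symm h23.symm h12 _ p3
    · subst z1 z3
      rw [tm_swap12, RR_swap12]
      exact base_case h _ _ _ h12.symm h23 h13 _ p2
    · rw [tm_swap12, RR_swap12, tm_swap23, RR_swap23]
      exact step _ _ _ h23 h12.symm h13.symm _ _ _ p2 p3 (by omega)
    · subst z2 z3
      exact base_case h _ _ _ h12 h13 h23 _ p1
    · rw [tm_swap23, RR_swap23]
      exact step _ _ _ h13 h12 h23.symm _ _ _ p1 p3 (by omega)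
    · exact step _ _ _ h12 h13 h23 _ _ _ p1 p2 (by omega)
    · exact step _ _ _ h12 h13 h23 _ _ _ p1 p2 (by omega)

end core

section coeffs
open PowerSeries Filter Topology

lemma Pinv_pow_eq {β : ℂ} (h : β ≠ 0) (k : ℕ) : Pinv β ^ (k + 1) =
    PowerSeries.mk (fun n => (-1) ^ n * (Nat.choose (n + k) n : ℂ) / β ^ (k + 1 + n)) := by
  induction k with
  | zero =>
    have e : PowerSeries.mk (fun n => (-1) ^ n * (Nat.choose (n + 0) n : ℂ) / β ^ (0 + 1 + n)) *
        (X + C β) = 1 := by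
      ext n
      rw [mul_add, map_add, coeff_mul_C]
      cases n with
      | zero => simp [h]
      | succ n =>
        rw [coeff_succ_mul_X, coeff_mk, coeff_mk, coeff_one]
        simp
        field_simp
        ring
    have h2 := Pinv_mul h
    rw [zero_add, pow_one]
    linear_combination (-Pinv β) * e + (PowerSeries.mk (fun n => (-1) ^ n * (Nat.choose (n + 0) n : ℂ) / β ^ (0 + 1 + n))) * h2
  | succ k ih =>
    set Q := PowerSeries.mk (fun n => (-1) ^ n * (Nat.choose (n + (k + 1)) n : ℂ) /
      β ^ (k + 1 + 1 + n)) with hQ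
    have e : Q * (X + C β) = Pinv β ^ (k + 1) := by
      rw [ih]
      ext n
      rw [mul_add, map_add, coeff_mul_C, hQ]
      cases n with
      | zero =>
        simp
        field_simp
        ring
      | succ n =>
        rw [coeff_succ_mul_X, coeff_mk, coeff_mk, coeff_mk]
        have : (n + 1 + (k + 1)).choose (n + 1) = (n + (k + 1)).choose n +
            (n + 1 + k).choose (n + 1) := by
          rw [show n + 1 + (k + 1) = (n + (k + 1)) + 1 by ring, Nat.choose_succ_succ]
          congr 2; ring
        rw [this]
        push_cast
        field_simp
        ring
    have h2 := Pinv_mul h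
    rw [pow_succ]
    linear_combination (-Pinv β) * e + Q * h2

lemma coeff_Pinv_pow {β : ℂ} (h : β ≠ 0) (k n : ℕ) (hk : 1 ≤ k) : coeff n (Pinv β ^ k) =
    (-1) ^ n * (Nat.choose (n + k - 1) n : ℂ) / β ^ (k + n) := by
  obtain ⟨k, rfl⟩ := Nat.exists_eq_add_of_le' hk
  rw [Pinv_pow_eq h, coeff_mk]; rfl

lemma coeff_Cs_mul (κ : ℕ → ℂ) (F : PowerSeries ℂ) (k : ℕ) :
    coeff k (Cs κ * F) = ∑ j ∈ range (k / 2 + 1), 2 * κ j * coeff (k - 2 * j) F := by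
  rw [coeff_mul, Finset.Nat.sum_antidiagonal_eq_sum_range_succ
    (fun i j => coeff i (Cs κ) * coeff j F)]
  have : ∀ i, coeff i (Cs κ) * coeff (k - i) F =
      if Even i then 2 * κ (i / 2) * coeff (k - i) F else 0 := by
    intro i; unfold Cs; rw [coeff_mk]; split_ifs <;> simp
  simp only [this]
  rw [← sum_filter]
  symm
  refine sum_nbij (fun j => 2 * j) ?_ ?_ ?_ ?_
  · intro j hj; simp only [mem_range, mem_filter] at *
    exact ⟨by omega, even_two_mul j⟩
  · intro i _ j _ hij; simpa using hij
  · intro i hi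
    simp only [coe_filter, Set.mem_ofPred_eq, mem_range, Set.mem_image, coe_range, Set.mem_Iio] at *
    obtain ⟨h1, j, rfl⟩ := hi
    exact ⟨j, by omega, by ring⟩
  · intro j _
    simp

lemma coeff_pair {β γ : ℂ} (hβ : β ≠ 0) (hγ : γ ≠ 0) (a c k : ℕ) (ha : 1 ≤ a) (hc : 1 ≤ c) :
    coeff k (Pinv β ^ a * Pinv γ ^ c) = (-1) ^ k * ∑ ω ∈ range (k + 1),
      (Nat.choose (ω + a - 1) ω : ℂ) * (Nat.choose (k + c - ω - 1) (c - 1) : ℂ) /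
        (β ^ (a + ω) * γ ^ (k + c - ω)) := by
  rw [coeff_mul, Finset.Nat.sum_antidiagonal_eq_sum_range_succ
    (fun i j => coeff i (Pinv β ^ a) * coeff j (Pinv γ ^ c)), mul_sum]
  refine sum_congr rfl fun ω hω => ?_
  rw [mem_range] at hω
  rw [coeff_Pinv_pow hβ _ _ ha, coeff_Pinv_pow hγ _ _ hc]
  obtain ⟨r, rfl⟩ := Nat.exists_eq_add_of_le (show ω ≤ k by omega)
  have e1 : ω + r - ω = r := by omega
  have e2 : ω + r + c - ω = r + c := by omega
  have e3 : (r + c - 1).choose r = (r + c - 1).choose (c - 1) := by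
    rw [← Nat.choose_symm (by omega)]; congr 1; omega
  rw [e1, e2, e3]
  ring

lemma pf_aux {R : Type*} [CommRing R] (U V M : R) (h : U * V = M * (U + V)) (p c : ℕ) :
    U ^ (p + 1) * V ^ (c + 1) =
      ∑ ω ∈ range (p + 1), (Nat.choose (p + c - ω) c : R) * M ^ (p + c + 1 - ω) * U ^ (ω + 1) +
      ∑ ω ∈ range (c + 1), (Nat.choose (p + c - ω) p : R) * M ^ (p + c + 1 - ω) * V ^ (ω + 1) := by
  have base : ∀ (U V : R), U * V = M * (U + V) → ∀ c : ℕ, U * V ^ (c + 1) = M ^ (c + 1) * U +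
      ∑ ω ∈ range (c + 1), M ^ (c + 1 - ω) * V ^ (ω + 1) := by
    intro U V h c
    induction c with
    | zero => simp; linear_combination h
    | succ c ih =>
      rw [sum_range_succ]
      have : ∑ ω ∈ range (c + 1), M ^ (c + 1 + 1 - ω) * V ^ (ω + 1) =
          M * ∑ ω ∈ range (c + 1), M ^ (c + 1 - ω) * V ^ (ω + 1) := by
        rw [mul_sum]
        refine sum_congr rfl fun ω hω => ?_
        rw [mem_range] at hω
        rw [show c + 1 + 1 - ω = (c + 1 - ω) + 1 by omega]; ring
      rw [this, show c + 1 + 1 - (c + 1) = 1 by omega]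
      linear_combination V ^ (c + 1) * h + M * ih
  have key : ∀ (U : R) (p c : ℕ),
      ∑ ω ∈ range (p + 1 + 1), (Nat.choose (p + 1 + (c + 1) - ω) (c + 1) : R) *
        M ^ (p + 1 + (c + 1) + 1 - ω) * U ^ (ω + 1) =
      M * (∑ ω ∈ range (p + 1), (Nat.choose (p + (c + 1) - ω) (c + 1) : R) *
        M ^ (p + (c + 1) + 1 - ω) * U ^ (ω + 1) +
       ∑ ω ∈ range (p + 1 + 1), (Nat.choose (p + 1 + c - ω) c : R) *
        M ^ (p + 1 + c + 1 - ω) * U ^ (ω + 1)) := by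
    intro U p c
    rw [sum_range_succ, sum_range_succ _ (p + 1)]
    have : ∑ ω ∈ range (p + 1), (Nat.choose (p + 1 + (c + 1) - ω) (c + 1) : R) *
        M ^ (p + 1 + (c + 1) + 1 - ω) * U ^ (ω + 1) =
      M * (∑ ω ∈ range (p + 1), (Nat.choose (p + (c + 1) - ω) (c + 1) : R) *
        M ^ (p + (c + 1) + 1 - ω) * U ^ (ω + 1) +
       ∑ ω ∈ range (p + 1), (Nat.choose (p + 1 + c - ω) c : R) *
        M ^ (p + 1 + c + 1 - ω) * U ^ (ω + 1)) := by
      rw [← sum_add_distrib, mul_sum]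
      refine sum_congr rfl fun ω hω => ?_
      rw [mem_range] at hω
      obtain ⟨r, rfl⟩ := Nat.exists_eq_add_of_le (show ω ≤ p by omega)
      rw [show ω + r + 1 + (c + 1) - ω = (r + c + 1) + 1 by omega,
        show ω + r + 1 + (c + 1) + 1 - ω = r + c + 3 by omega,
        show ω + r + (c + 1) - ω = r + c + 1 by omega,
        show ω + r + (c + 1) + 1 - ω = r + c + 2 by omega,
        show ω + r + 1 + c - ω = r + c + 1 by omega,
        show ω + r + 1 + c + 1 - ω = r + c + 2 by omega, Nat.choose_succ_succ]
      push_cast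
      ring
    rw [this, show p + 1 + (c + 1) - (p + 1) = c + 1 by omega,
      show p + 1 + (c + 1) + 1 - (p + 1) = c + 2 by omega,
      show p + 1 + c - (p + 1) = c by omega,
      show p + 1 + c + 1 - (p + 1) = c + 1 by omega]
    simp
    ring
  induction p generalizing c with
  | zero =>
    simp only [zero_add, pow_one, range_one, sum_singleton]
    rw [base U V h c]
    simp
  | succ p ihp =>
    induction c with
    | zero =>
      have := base V U (by rw [mul_comm, add_comm]; exact h) (p + 1)
      simp only [zero_add, pow_one, range_one, sum_singleton]
      rw [mul_comm, this]
      simp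
      ring
    | succ c ihc =>
      rw [key U p c]
      have k2 := key V c p
      simp only [add_comm (c + 1) (p + 1), add_comm (c + 1) p, add_comm c (p + 1)] at k2
      rw [k2]
      have i1 := ihp (c + 1)
      linear_combination U ^ (p + 1) * V ^ (c + 1) * h + M * i1 + M * ihc

lemma coeff_mixed {m ν : ℂ} (hm : m ≠ 0) (hν : ν ≠ 0) (hN : m + ν ≠ 0) (p c k : ℕ)
    (hp : 1 ≤ p) (hc : 1 ≤ c) :
    coeff k (Pinv (-m) ^ p * Pinv ν ^ c) =
      (-1) ^ p * ∑ ω ∈ range p, (Nat.choose (ω + k) ω : ℂ) *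
        (Nat.choose (p + c - 2 - ω) (c - 1) : ℂ) / (m ^ (k + ω + 1) * (m + ν) ^ (p + c - 1 - ω)) +
      (-1) ^ (p + k) * ∑ ω ∈ range c, (Nat.choose (ω + k) ω : ℂ) *
        (Nat.choose (p + c - 2 - ω) (p - 1) : ℂ) / (ν ^ (k + ω + 1) * (m + ν) ^ (p + c - 1 - ω)) := by
  obtain ⟨p, rfl⟩ := Nat.exists_eq_add_of_le' hp
  obtain ⟨c, rfl⟩ := Nat.exists_eq_add_of_le' hc
  have h1 := Pinv_mul (neg_ne_zero.mpr hm)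
  have h2 := Pinv_mul hν
  have h3 : (C (m + ν)⁻¹ : PowerSeries ℂ) * C (m + ν) = 1 := by
    rw [← map_mul, inv_mul_cancel₀ hN, map_one]
  have h : (-Pinv (-m)) * Pinv ν = C (m + ν)⁻¹ * ((-Pinv (-m)) + Pinv ν) := by
    rw [map_neg] at h1
    rw [map_add] at h3
    linear_combination (Pinv (-m) * Pinv ν) * h3 + C (m + ν)⁻¹ * Pinv ν * h1 - C (m + ν)⁻¹ * Pinv (-m) * h2
  have h4 := pf_aux _ _ _ h p c
  have h5 : Pinv (-m) ^ (p + 1) * Pinv ν ^ (c + 1) =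
      C ((-1) ^ (p + 1)) * ((-Pinv (-m)) ^ (p + 1) * Pinv ν ^ (c + 1)) := by
    rw [map_pow, map_neg, map_one, ← mul_assoc, ← mul_pow]; simp
  rw [h5, h4, coeff_C_mul, map_add, map_sum, map_sum, mul_add, pow_add (-1 : ℂ) (p + 1) k, mul_assoc]
  have cc : ∀ (r t : ℕ) (F : PowerSeries ℂ),
      coeff k ((r : PowerSeries ℂ) * (C (m + ν)⁻¹) ^ t * F) =
        (r : ℂ) / (m + ν) ^ t * coeff k F := by
    intro r t F
    have : (r : PowerSeries ℂ) * (C (m + ν)⁻¹) ^ t = C ((r : ℂ) / (m + ν) ^ t) := by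
      rw [← map_pow, ← map_natCast (C (R := ℂ)), ← map_mul, inv_pow, div_eq_mul_inv]
    rw [this, coeff_C_mul]
  congr 1
  · congr 1
    refine sum_congr rfl fun ω hω => ?_
    rw [mem_range] at hω
    rw [cc]
    have : (-Pinv (-m)) ^ (ω + 1) = C ((-1) ^ (ω + 1)) * Pinv (-m) ^ (ω + 1) := by
      rw [map_pow, map_neg, map_one, ← mul_pow]; simp
    rw [this, coeff_C_mul, coeff_Pinv_pow (neg_ne_zero.mpr hm) _ _ (by omega)]
    rw [show p + 1 + (c + 1) - 2 - ω = p + c - ω by omega,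
      show p + 1 + (c + 1) - 1 - ω = p + c + 1 - ω by omega,
      show k + (ω + 1) - 1 = ω + k by omega, neg_pow m,
      show (ω + k).choose k = (ω + k).choose ω by
        rw [← Nat.choose_symm (by omega)]; congr 1; omega]
    have e : ((-1 : ℂ) ^ (ω + 1 + k)) * ((-1 : ℂ) ^ (ω + 1 + k)) = 1 := by
      rw [← mul_pow]; simp
    have e' : ((-1 : ℂ) ^ (ω + 1 + k)) ≠ 0 := pow_ne_zero _ (by norm_num)
    simp only [Nat.add_sub_cancel]
    rw [show k + ω + 1 = ω + 1 + k by ring]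
    field_simp
    ring
  · congr 1
    rw [mul_sum]
    refine sum_congr rfl fun ω hω => ?_
    rw [mem_range] at hω
    rw [cc, coeff_Pinv_pow hν _ _ (by omega)]
    rw [show p + 1 + (c + 1) - 2 - ω = p + c - ω by omega,
      show p + 1 + (c + 1) - 1 - ω = p + c + 1 - ω by omega,
      show k + (ω + 1) - 1 = ω + k by omega,
      show (ω + k).choose k = (ω + k).choose ω by
        rw [← Nat.choose_symm (by omega)]; congr 1; omega]
    simp only [Nat.add_sub_cancel]
    rw [show k + ω + 1 = ω + 1 + k by ring]
    field_simp

end coeffs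

section summ
open Filter Topology

noncomputable def tT (p : ℕ) (s : ℂ) (q : ℕ) (x y : ℂ) (lm : ℤ × ℕ) : ℂ :=
  if lm.1 ≠ 0 ∧ lm.1 + ((lm.2 : ℤ) + 1) ≠ 0 then
      x ^ lm.1 * y ^ (lm.2 + 1) /
        ((lm.1 : ℂ) ^ p * (((lm.2 + 1 : ℕ) : ℂ)) ^ s *
          (((lm.1 + (lm.2 : ℤ) + 1 : ℤ) : ℂ)) ^ q)
    else 0

lemma norm_int_inv_le (u : ℤ) (k : ℕ) (hk : 1 ≤ k) : (‖(u : ℂ) ^ k‖)⁻¹ ≤ |(u : ℝ)|⁻¹ := by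
  rw [norm_pow, Complex.norm_intCast]
  rcases eq_or_ne u 0 with rfl | hl
  · have : k ≠ 0 := by omega
    simp [this]
  · have : (1 : ℝ) ≤ |(u : ℝ)| := by exact_mod_cast Int.one_le_abs hl
    gcongr
    exact le_self_pow₀ this (by omega)

lemma norm_int_inv_le_one (u : ℤ) (k : ℕ) (hk : 1 ≤ k) : (‖(u : ℂ) ^ k‖)⁻¹ ≤ 1 := by
  refine (norm_int_inv_le u k hk).trans ?_
  rcases eq_or_ne u 0 with rfl | hl
  · simp
  · have : (1 : ℝ) ≤ |(u : ℝ)| := by exact_mod_cast Int.one_le_abs hl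
    exact inv_le_one_of_one_le₀ this

lemma pair_le (u v : ℤ) (k j : ℕ) (hk : 1 ≤ k) (hj : 1 ≤ j) :
    (‖(u : ℂ) ^ k‖)⁻¹ * (‖(v : ℂ) ^ j‖)⁻¹ ≤ 1 / (u : ℝ) ^ 2 + 1 / (v : ℝ) ^ 2 := by
  have h1 := norm_int_inv_le u k hk
  have h2 := norm_int_inv_le v j hj
  have e1 : 1 / (u : ℝ) ^ 2 = (|(u : ℝ)|⁻¹) ^ 2 := by rw [inv_pow, sq_abs, one_div]
  have e2 : 1 / (v : ℝ) ^ 2 = (|(v : ℝ)|⁻¹) ^ 2 := by rw [inv_pow, sq_abs, one_div]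
  rw [e1, e2]
  have : (‖(u : ℂ) ^ k‖)⁻¹ * (‖(v : ℂ) ^ j‖)⁻¹ ≤ |(u : ℝ)|⁻¹ * |(v : ℝ)|⁻¹ := by gcongr
  nlinarith [sq_nonneg (|(u : ℝ)|⁻¹ - |(v : ℝ)|⁻¹), sq_nonneg (|(u : ℝ)|⁻¹ + |(v : ℝ)|⁻¹)]

lemma summable_g : Summable (fun l : ℤ => 1 / (l : ℝ) ^ 2) :=
  Real.summable_one_div_int_pow.mpr (by norm_num)

lemma summable_f {σ : ℝ} (h : 1 < σ) : Summable (fun n : ℕ => (((n + 1 : ℕ) : ℝ) ^ σ)⁻¹) :=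
  (summable_nat_add_iff 1).mpr (Real.summable_nat_rpow_inv.mpr h)

lemma summable_gf {σ : ℝ} (h : 1 < σ) :
    Summable (fun t : ℤ × ℕ => (1 / (t.1 : ℝ) ^ 2) * (((t.2 + 1 : ℕ) : ℝ) ^ σ)⁻¹) :=
  summable_g.mul_of_nonneg (summable_f h) (fun _ => by positivity) (fun _ => by positivity)

lemma summable_gfg {σ : ℝ} (h : 1 < σ) :
    Summable (fun t : (ℤ × ℕ) × ℤ => ((1 / (t.1.1 : ℝ) ^ 2) * (((t.1.2 + 1 : ℕ) : ℝ) ^ σ)⁻¹) *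
      (1 / (t.2 : ℝ) ^ 2)) :=
  (summable_gf h).mul_of_nonneg summable_g (fun _ => by positivity) (fun _ => by positivity)

lemma norm_cpow_succ (n : ℕ) (s : ℂ) : ‖((n + 1 : ℕ) : ℂ) ^ s‖ = ((n + 1 : ℕ) : ℝ) ^ s.re :=
  Complex.norm_natCast_cpow_of_pos (by omega) s

lemma summable_tT (p : ℕ) (s : ℂ) (q : ℕ) (x y : ℂ) (hp : 1 ≤ p) (hq : 1 ≤ q) (hs : 1 < s.re)
    (hx : ‖x‖ = 1) (hy : ‖y‖ = 1) : Summable (tT p s q x y) := by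
  have i : Function.Injective (fun t : ℤ × ℕ => ((t.1 + (t.2 : ℤ) + 1, t.2) : ℤ × ℕ)) := by
    rintro ⟨a, b⟩ ⟨c, d⟩ h
    simp only [Prod.mk.injEq] at h ⊢
    omega
  have h1 := (summable_gf hs).add ((summable_gf hs).comp_injective i)
  refine Summable.of_norm_bounded h1 ?_
  rintro ⟨l, n⟩
  unfold tT
  simp only [Function.comp]
  split_ifs
  · have := pair_le l (l + n + 1) p q hp hq
    rw [norm_div, norm_mul, norm_mul, norm_mul, norm_zpow, norm_pow y, hx, hy, norm_cpow_succ]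
    simp only [one_zpow, one_pow]
    calc _ = (‖(l : ℂ) ^ p‖)⁻¹ * (‖((l + n + 1 : ℤ) : ℂ) ^ q‖)⁻¹ * (((n + 1 : ℕ) : ℝ) ^ s.re)⁻¹ := by
          field_simp
      _ ≤ _ := by
          rw [← add_mul]
          gcongr
  · simp only [norm_zero]
    positivity

lemma hasSum_T (p : ℕ) (s : ℂ) (q : ℕ) (x y : ℂ) (hp : 1 ≤ p) (hq : 1 ≤ q) (hs : 1 < s.re)
    (hx : ‖x‖ = 1) (hy : ‖y‖ = 1) : HasSum (tT p s q x y) (T p s q x y) :=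
  (summable_tT p s q x y hp hq hs hx hy).hasSum

noncomputable def den (p q a b c : ℕ) (s : ℂ) (t : (ℤ × ℕ) × ℤ) : ℂ :=
  (t.2 : ℂ) ^ p * (t.1.1 : ℂ) ^ q * ((t.1.2 + 1 : ℕ) : ℂ) ^ s * ((t.2 + t.1.1 : ℤ) : ℂ) ^ a *
    ((t.1.1 + t.1.2 + 1 : ℤ) : ℂ) ^ b * ((t.2 + (t.1.1 + t.1.2 + 1) : ℤ) : ℂ) ^ c

noncomputable def Gx (x : ℂ) (p q a b c : ℕ) (s : ℂ) (t : (ℤ × ℕ) × ℤ) : ℂ :=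
  x ^ t.2 * x ^ (t.1.2 + 1) / den p q a b c s t

lemma summable_Gx (x : ℂ) (p q a b c : ℕ) (s : ℂ) (hp : 1 ≤ p) (hq : 1 ≤ q) (ha : 1 ≤ a)
    (hb : 1 ≤ b) (hc : 1 ≤ c) (hs : 1 < s.re)
    (hx : ‖x‖ = 1) : Summable (Gx x p q a b c s) := by
  have i1 : Function.Injective (fun t : (ℤ × ℕ) × ℤ =>
      (((t.1.1 + t.1.2 + 1, t.1.2), t.2) : (ℤ × ℕ) × ℤ)) := by
    rintro ⟨⟨a, b⟩, c⟩ ⟨⟨d, e⟩, f⟩ h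
    simp only [Prod.mk.injEq] at h ⊢
    omega
  have i2 : Function.Injective (fun t : (ℤ × ℕ) × ℤ =>
      ((t.1, t.2 + t.1.1) : (ℤ × ℕ) × ℤ)) := by
    rintro ⟨⟨a, b⟩, c⟩ ⟨⟨d, e⟩, f⟩ h
    simp only [Prod.mk.injEq] at h ⊢
    omega
  have i3 : Function.Injective (fun t : (ℤ × ℕ) × ℤ =>
      (((t.1.1 + t.1.2 + 1, t.1.2), t.2 + t.1.1) : (ℤ × ℕ) × ℤ)) := by
    rintro ⟨⟨a, b⟩, c⟩ ⟨⟨d, e⟩, f⟩ h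
    simp only [Prod.mk.injEq] at h ⊢
    omega
  have h0 := summable_gfg hs
  have h1 := ((h0.add (h0.comp_injective i1)).add (h0.comp_injective i2)).add
    (h0.comp_injective i3)
  refine Summable.of_norm_bounded h1 ?_
  rintro ⟨⟨m, n⟩, l⟩
  unfold Gx den
  simp only [Function.comp]
  have e1 := pair_le m (m + n + 1) q b hq hb
  have e2 := pair_le l (l + m) p a hp ha
  have e3 := norm_int_inv_le_one (l + (m + n + 1)) c hc
  rw [norm_div, norm_mul, norm_mul, norm_mul, norm_mul, norm_mul, norm_mul, norm_zpow,
    norm_pow x, hx, norm_cpow_succ]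
  simp only [one_zpow, one_pow]
  set F := (((n + 1 : ℕ) : ℝ) ^ s.re)⁻¹
  have hF : 0 ≤ F := by positivity
  calc _ = F * ((‖(m : ℂ) ^ q‖)⁻¹ * (‖((m + n + 1 : ℤ) : ℂ) ^ b‖)⁻¹) *
        ((‖(l : ℂ) ^ p‖)⁻¹ * (‖((l + m : ℤ) : ℂ) ^ a‖)⁻¹) *
        (‖((l + (m + n + 1) : ℤ) : ℂ) ^ c‖)⁻¹ := by
        simp only [F, one_mul, one_div, mul_inv]
        ring
    _ ≤ F * (1 / (m : ℝ) ^ 2 + 1 / ((m + n + 1 : ℤ) : ℝ) ^ 2) *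
        (1 / (l : ℝ) ^ 2 + 1 / ((l + m : ℤ) : ℝ) ^ 2) * 1 := by
        gcongr
    _ = _ := by ring

end summ

section jgen
open PowerSeries Filter Topology

noncomputable def Jgen (x : ℂ) (κ : ℕ → ℂ) (p q a b c : ℕ) (s : ℂ) : ℂ :=
  2 * (-1 : ℂ) ^ p * ∑ j ∈ range (p / 2 + 1), κ j *
      ∑ ω ∈ range (p - 2 * j + 1),
        (Nat.choose (ω + a - 1) ω : ℂ) * (Nat.choose (p + c - 2 * j - ω - 1) (c - 1) : ℂ) *
          T (q + a + ω) s (p + b + c - 2 * j - ω) 1 x +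
  2 * (-1 : ℂ) ^ (p + a) * ∑ j ∈ range (c / 2 + 1), κ j *
      ∑ ω ∈ range (c - 2 * j + 1),
        (Nat.choose (ω + a - 1) ω : ℂ) * (Nat.choose (p + c - 2 * j - ω - 1) (p - 1) : ℂ) *
          T q (s + a + ω) (p + b + c - 2 * j - ω) x 1 +
  2 * (-1 : ℂ) ^ p * ∑ j ∈ range (a / 2 + 1), κ j *
      ∑ ω ∈ range p,
        (Nat.choose (ω + a - 2 * j) ω : ℂ) * (Nat.choose (p + c - 2 - ω) (c - 1) : ℂ) *
          T (q + a - 2 * j + ω + 1) s (p + b + c - 1 - ω) x x +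
  2 * (-1 : ℂ) ^ (p + a) * ∑ j ∈ range (a / 2 + 1), κ j *
      ∑ ω ∈ range c,
        (Nat.choose (ω + a - 2 * j) ω : ℂ) * (Nat.choose (p + c - 2 - ω) (p - 1) : ℂ) *
          T q (s + ((a - 2 * j : ℕ) : ℂ) + ω + 1) (p + b + c - 1 - ω) x x

noncomputable def jt (x : ℂ) (κ : ℕ → ℂ) (p q a b c : ℕ) (s : ℂ) (t : ℤ × ℕ) : ℂ :=
  2 * (-1 : ℂ) ^ p * ∑ j ∈ range (p / 2 + 1), κ j *
      ∑ ω ∈ range (p - 2 * j + 1),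
        (Nat.choose (ω + a - 1) ω : ℂ) * (Nat.choose (p + c - 2 * j - ω - 1) (c - 1) : ℂ) *
          tT (q + a + ω) s (p + b + c - 2 * j - ω) 1 x t +
  2 * (-1 : ℂ) ^ (p + a) * ∑ j ∈ range (c / 2 + 1), κ j *
      ∑ ω ∈ range (c - 2 * j + 1),
        (Nat.choose (ω + a - 1) ω : ℂ) * (Nat.choose (p + c - 2 * j - ω - 1) (p - 1) : ℂ) *
          tT q (s + a + ω) (p + b + c - 2 * j - ω) x 1 t +
  2 * (-1 : ℂ) ^ p * ∑ j ∈ range (a / 2 + 1), κ j *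
      ∑ ω ∈ range p,
        (Nat.choose (ω + a - 2 * j) ω : ℂ) * (Nat.choose (p + c - 2 - ω) (c - 1) : ℂ) *
          tT (q + a - 2 * j + ω + 1) s (p + b + c - 1 - ω) x x t +
  2 * (-1 : ℂ) ^ (p + a) * ∑ j ∈ range (a / 2 + 1), κ j *
      ∑ ω ∈ range c,
        (Nat.choose (ω + a - 2 * j) ω : ℂ) * (Nat.choose (p + c - 2 - ω) (p - 1) : ℂ) *
          tT q (s + ((a - 2 * j : ℕ) : ℂ) + ω + 1) (p + b + c - 1 - ω) x x t

lemma hasSum_jt (x : ℂ) (κ : ℕ → ℂ) (p q a b c : ℕ) (s : ℂ) (hp : 1 ≤ p) (hq : 1 ≤ q)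
    (ha : 1 ≤ a) (hb : 1 ≤ b) (hc : 1 ≤ c) (hs : 1 < s.re) (hx : ‖x‖ = 1) :
    HasSum (jt x κ p q a b c s) (Jgen x κ p q a b c s) := by
  unfold jt Jgen
  refine ((HasSum.add (HasSum.add ?_ ?_) ?_).add ?_) <;>
  · refine HasSum.mul_left _ (hasSum_sum fun j hj => HasSum.mul_left _ (hasSum_sum fun ω hω =>
      HasSum.mul_left _ (hasSum_T _ _ _ _ _ ?_ ?_ ?_ ?_ ?_))) <;>
    rw [mem_range] at hj hω <;>
    first
      | omega
      | exact hx
      | exact norm_one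
      | exact hs
      | (simp only [Complex.add_re, Complex.natCast_re, Complex.one_re]
         have h1 : (0 : ℝ) ≤ (ω : ℝ) := by positivity
         have h2 : (0 : ℝ) ≤ (a : ℝ) := by positivity
         have h3 : (0 : ℝ) ≤ ((a - 2 * j : ℕ) : ℝ) := by positivity
         linarith)

end jgen

section pointwise
open PowerSeries Filter Topology

lemma neg_one_pow_sub_two (p j : ℕ) (h : 2 * j ≤ p) : (-1 : ℂ) ^ (p - 2 * j) = (-1) ^ p := by
  obtain ⟨r, rfl⟩ := Nat.exists_eq_add_of_le h
  rw [Nat.add_sub_cancel_left, pow_add, pow_mul]; simp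

lemma tT_eq {m : ℤ} {n : ℕ} (hm : m ≠ 0) (hN : m + n + 1 ≠ 0) (p : ℕ) (s : ℂ) (q : ℕ) (x y : ℂ) :
    tT p s q x y (m, n) = x ^ m * y ^ (n + 1) / ((m : ℂ) ^ p * ((n + 1 : ℕ) : ℂ) ^ s *
      ((m + n + 1 : ℤ) : ℂ) ^ q) := by
  unfold tT
  rw [if_pos]
  exact ⟨hm, by simpa [add_assoc] using hN⟩

lemma jt_eq_RR {x : ℂ} {κ : ℕ → ℂ} (h : Good x κ) (p q a b c : ℕ) (s : ℂ) (hp : 1 ≤ p)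
    (ha : 1 ≤ a) (hc : 1 ≤ c) {m : ℤ} {n : ℕ} (hm : m ≠ 0) (hN : m + n + 1 ≠ 0) :
    jt x κ p q a b c s (m, n) = x ^ (n + 1) / ((m : ℂ) ^ q * ((n + 1 : ℕ) : ℂ) ^ s *
      ((m + n + 1 : ℤ) : ℂ) ^ b) * RR x κ 0 (-m) (-(m + n + 1)) p a c := by
  have hmC : (m : ℂ) ≠ 0 := by exact_mod_cast hm
  have hνC : ((n + 1 : ℕ) : ℂ) ≠ 0 := by exact_mod_cast Nat.succ_ne_zero n
  have hNC : ((m + n + 1 : ℤ) : ℂ) ≠ 0 := by exact_mod_cast hN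
  have hsum : ((m + n + 1 : ℤ) : ℂ) = (m : ℂ) + ((n + 1 : ℕ) : ℂ) := by push_cast; ring
  have hS : ((n + 1 : ℕ) : ℂ) ^ s ≠ 0 := by
    rw [Ne, Complex.cpow_eq_zero_iff]; tauto
  have hxm : x ^ (-(m + (n : ℤ) + 1)) * x ^ (n + 1) = x ^ m := by
    rw [h.zpow_neg, add_assoc, zpow_add₀ h.ne]
    have : x ^ ((n : ℤ) + 1) = x ^ (n + 1) := by exact_mod_cast zpow_natCast x (n + 1)
    rw [this, mul_assoc, ← pow_add, ← two_mul, pow_mul]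
    rcases h.hx with h | h <;> simp [h]
  unfold RR fr jt
  simp only [tT_eq hm hN]
  have d1 : (((0 : ℤ) : ℂ) - ((-m : ℤ) : ℂ)) = m := by push_cast; ring
  have d2 : (((0 : ℤ) : ℂ) - ((-(m + n + 1) : ℤ) : ℂ)) = ((m + n + 1 : ℤ) : ℂ) := by push_cast; ring
  have d3 : (((-m : ℤ) : ℂ) - ((0 : ℤ) : ℂ)) = -m := by push_cast; ring
  have d4 : (((-m : ℤ) : ℂ) - ((-(m + n + 1) : ℤ) : ℂ)) = ((n + 1 : ℕ) : ℂ) := by push_cast; ring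
  have d5 : (((-(m + n + 1) : ℤ) : ℂ) - ((0 : ℤ) : ℂ)) = -((m + n + 1 : ℤ) : ℂ) := by push_cast; ring
  have d6 : (((-(m + n + 1) : ℤ) : ℂ) - ((-m : ℤ) : ℂ)) = -((n + 1 : ℕ) : ℂ) := by push_cast; ring
  rw [d1, d2, d3, d4, d5, d6]
  have hS1 : ∀ (u v : ℕ), ((n + 1 : ℕ) : ℂ) ^ (s + u + v) =
      ((n + 1 : ℕ) : ℂ) ^ s * ((n + 1 : ℕ) : ℂ) ^ (u + v) := by
    intro u v
    rw [Complex.cpow_add _ _ hνC, Complex.cpow_add _ _ hνC, Complex.cpow_natCast,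
      Complex.cpow_natCast, pow_add, mul_assoc]
  have hS2 : ∀ (u v : ℕ), ((n + 1 : ℕ) : ℂ) ^ (s + u + v + 1) =
      ((n + 1 : ℕ) : ℂ) ^ s * ((n + 1 : ℕ) : ℂ) ^ (u + v + 1) := by
    intro u v
    rw [Complex.cpow_add _ _ hνC, hS1, Complex.cpow_one, pow_succ, mul_assoc]
  simp only [hS1, hS2]
  rw [mul_assoc (Cs κ), mul_assoc (Cs κ), mul_assoc (Cs κ), coeff_Cs_mul, coeff_Cs_mul,
    coeff_Cs_mul, h.zpow_neg m]
  set ν : ℂ := ((n + 1 : ℕ) : ℂ)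
  set N : ℂ := ((m + n + 1 : ℤ) : ℂ)
  set S : ℂ := ν ^ s
  set M : ℂ := (m : ℂ)
  set y : ℂ := x ^ (n + 1)
  -- first block
  have b1 : 2 * (-1 : ℂ) ^ p * ∑ j ∈ range (p / 2 + 1), κ j *
      ∑ ω ∈ range (p - 2 * j + 1),
        (Nat.choose (ω + a - 1) ω : ℂ) * (Nat.choose (p + c - 2 * j - ω - 1) (c - 1) : ℂ) *
          ((1 : ℂ) ^ m * y / (M ^ (q + a + ω) * S * N ^ (p + b + c - 2 * j - ω))) =
      y / (M ^ q * S * N ^ b) * (x ^ (0 : ℤ) * ∑ j ∈ range (p / 2 + 1),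
        2 * κ j * coeff (p - 2 * j) (Pinv M ^ a * Pinv N ^ c)) := by
    rw [zpow_zero, one_mul, one_zpow, mul_sum, mul_sum]
    refine sum_congr rfl fun j hj => ?_
    rw [mem_range] at hj
    rw [coeff_pair hmC hNC _ _ _ ha hc, neg_one_pow_sub_two p j (by omega)]
    simp only [mul_sum]
    refine sum_congr rfl fun ω hω => ?_
    rw [mem_range] at hω
    rw [show p - 2 * j + c - ω = p + c - 2 * j - ω by omega,
      show p + b + c - 2 * j - ω = b + (p + c - 2 * j - ω) by omega,
      pow_add N, add_assoc q, pow_add M q]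
    field_simp
  have b2 : 2 * (-1 : ℂ) ^ (p + a) * ∑ j ∈ range (c / 2 + 1), κ j *
      ∑ ω ∈ range (c - 2 * j + 1),
        (Nat.choose (ω + a - 1) ω : ℂ) * (Nat.choose (p + c - 2 * j - ω - 1) (p - 1) : ℂ) *
          (x ^ m * 1 ^ (n + 1) / (M ^ q * (S * ν ^ (a + ω)) * N ^ (p + b + c - 2 * j - ω))) =
      y / (M ^ q * S * N ^ b) * (x ^ (-(m + (n : ℤ) + 1)) * ∑ j ∈ range (c / 2 + 1),
        2 * κ j * coeff (c - 2 * j) (Pinv (-N) ^ p * Pinv (-ν) ^ a)) := by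
    rw [← hxm, one_pow, mul_sum, mul_sum, mul_sum]
    refine sum_congr rfl fun j hj => ?_
    rw [mem_range] at hj
    rw [mul_comm (Pinv (-N) ^ p), coeff_pair (neg_ne_zero.mpr hνC) (neg_ne_zero.mpr hNC) _ _ _ ha hp]
    simp only [mul_sum]
    refine sum_congr rfl fun ω hω => ?_
    rw [mem_range] at hω
    obtain ⟨r, hr⟩ := Nat.exists_eq_add_of_le (show ω ≤ c - 2 * j by omega)
    rw [show c - 2 * j + p - ω = p + r by omega,
      show p + c - 2 * j - ω - 1 = p + r - 1 by omega,
      show p + b + c - 2 * j - ω = b + (p + r) by omega, hr, pow_add N b,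
      neg_pow ν, neg_pow N]
    have e : (-1 : ℂ) ^ (ω + r) = (-1) ^ (p + a) * ((-1) ^ (a + ω) * (-1) ^ (p + r)) := by
      rw [← pow_add, ← pow_add, show p + a + (a + ω + (p + r)) = 2 * (p + a) + (ω + r) by ring,
        pow_add _ (2 * (p + a)), pow_mul]
      simp
    have e1 : ((-1 : ℂ) ^ (a + ω)) ≠ 0 := pow_ne_zero _ (by norm_num)
    have e2 : ((-1 : ℂ) ^ (p + r)) ≠ 0 := pow_ne_zero _ (by norm_num)
    rw [e]
    field_simp
  have b3 : 2 * (-1 : ℂ) ^ p * ∑ j ∈ range (a / 2 + 1), κ j *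
      ∑ ω ∈ range p,
        (Nat.choose (ω + a - 2 * j) ω : ℂ) * (Nat.choose (p + c - 2 - ω) (c - 1) : ℂ) *
          (x ^ m * y / (M ^ (q + a - 2 * j + ω + 1) * S * N ^ (p + b + c - 1 - ω))) +
      2 * (-1 : ℂ) ^ (p + a) * ∑ j ∈ range (a / 2 + 1), κ j *
      ∑ ω ∈ range c,
        (Nat.choose (ω + a - 2 * j) ω : ℂ) * (Nat.choose (p + c - 2 - ω) (p - 1) : ℂ) *
          (x ^ m * y / (M ^ q * (S * ν ^ (a - 2 * j + ω + 1)) * N ^ (p + b + c - 1 - ω))) =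
      y / (M ^ q * S * N ^ b) * (x ^ m * ∑ j ∈ range (a / 2 + 1),
        2 * κ j * coeff (a - 2 * j) (Pinv (-M) ^ p * Pinv ν ^ c)) := by
    rw [mul_sum, mul_sum, mul_sum, mul_sum, ← sum_add_distrib]
    refine sum_congr rfl fun j hj => ?_
    rw [mem_range] at hj
    rw [coeff_mixed hmC hνC (by rw [← hsum]; exact hNC) _ _ _ hp hc, ← hsum, pow_add _ p (a - 2 * j),
      neg_one_pow_sub_two a j (by omega), ← pow_add]
    simp only [mul_add, mul_sum]
    congr 1
    · refine sum_congr rfl fun ω hω => ?_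
      rw [mem_range] at hω
      rw [show ω + (a - 2 * j) = ω + a - 2 * j by omega,
        show q + a - 2 * j + ω + 1 = q + (a - 2 * j + ω + 1) by omega,
        show p + b + c - 1 - ω = b + (p + c - 1 - ω) by omega, pow_add N b, pow_add M q]
      field_simp
    · refine sum_congr rfl fun ω hω => ?_
      rw [mem_range] at hω
      rw [show ω + (a - 2 * j) = ω + a - 2 * j by omega,
        show p + b + c - 1 - ω = b + (p + c - 1 - ω) by omega, pow_add N b]
      field_simp
  rw [b1, b2]
  linear_combination b3

lemma tsum_fiber {x : ℂ} {κ : ℕ → ℂ} (h : Good x κ) (p q a b c : ℕ) (s : ℂ) (hp : 1 ≤ p)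
    (hq : 1 ≤ q) (ha : 1 ≤ a) (hb : 1 ≤ b) (hc : 1 ≤ c) (hs : 1 < s.re) (t : ℤ × ℕ) :
    ∑' l : ℤ, Gx x p q a b c s (t, l) = jt x κ p q a b c s t := by
  have hx : ‖x‖ = 1 := by rcases h.hx with h | h <;> simp [h]
  obtain ⟨m, n⟩ := t
  by_cases hm : m = 0
  · subst hm
    have : ∀ l, Gx x p q a b c s ((0, n), l) = 0 := by
      intro l; unfold Gx den
      have : q ≠ 0 := by omega
      simp [this]
    simp [this, jt, tT]
  by_cases hN : m + n + 1 = 0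
  · have : ∀ l, Gx x p q a b c s ((m, n), l) = 0 := by
      intro l; unfold Gx den
      have : b ≠ 0 := by omega
      simp only [hN]
      simp [this]
    have hN' : m + ((n : ℤ) + 1) = 0 := by omega
    simp [this, jt, tT, hN']
  have hsum : Summable (fun l : ℤ => Gx x p q a b c s ((m, n), l)) :=
    (summable_Gx x p q a b c s hp hq ha hb hc hs hx).prod_factor (m, n)
  have e : ∀ l, Gx x p q a b c s ((m, n), l) = x ^ (n + 1) / ((m : ℂ) ^ q * ((n + 1 : ℕ) : ℂ) ^ s *
      ((m + n + 1 : ℤ) : ℂ) ^ b) * tm x 0 (-m) (-(m + n + 1)) p a c l := by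
    intro l
    unfold Gx den tm
    simp only
    split_ifs with hl
    · have h1 : p ≠ 0 := by omega
      have h2 : a ≠ 0 := by omega
      have h3 : c ≠ 0 := by omega
      rcases hl with rfl | rfl | rfl
      · simp [h1]
      · simp [h2]
      · rw [show (-(m + (n : ℤ) + 1) + (m + n + 1)) = 0 by ring]
        simp [h3]
    · have f1 : ((l : ℂ) - ((0 : ℤ) : ℂ)) = l := by simp
      have f2 : ((l : ℂ) - ((-m : ℤ) : ℂ)) = ((l + m : ℤ) : ℂ) := by push_cast; ring
      have f3 : ((l : ℂ) - ((-(m + n + 1) : ℤ) : ℂ)) = ((l + (m + n + 1) : ℤ) : ℂ) := by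
        push_cast; ring
      rw [f1, f2, f3, div_mul_div_comm]
      congr 1 <;> ring
  have lim1 : Tendsto (fun K : ℕ => ∑ l ∈ Icc (-(K : ℤ)) K, Gx x p q a b c s ((m, n), l)) atTop
      (𝓝 (∑' l : ℤ, Gx x p q a b c s ((m, n), l))) := by
    have : Tendsto (fun K : ℕ => Icc (-(K : ℤ)) K) atTop atTop := by
      refine tendsto_atTop_finset_of_monotone ?_ ?_
      · intro i j hij
        apply Icc_subset_Icc <;> omega
      · intro z; refine ⟨z.natAbs, ?_⟩; rw [mem_Icc]; omega
    exact hsum.hasSum.comp this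
  have lim2 := core_lim h (p + a + c) 0 (-m) (-(m + n + 1)) (by omega) (by omega) (by omega)
    p a c (by omega) le_rfl
  have lim3 := lim2.const_mul (x ^ (n + 1) / ((m : ℂ) ^ q * ((n + 1 : ℕ) : ℂ) ^ s *
      ((m + n + 1 : ℤ) : ℂ) ^ b))
  rw [jt_eq_RR h p q a b c s hp ha hc hm hN]
  refine tendsto_nhds_unique lim1 (lim3.congr fun K => ?_)
  rw [mul_sum]
  exact sum_congr rfl fun l _ => (e l).symm

lemma tsum_Gx {x : ℂ} {κ : ℕ → ℂ} (h : Good x κ) (p q a b c : ℕ) (s : ℂ) (hp : 1 ≤ p)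
    (hq : 1 ≤ q) (ha : 1 ≤ a) (hb : 1 ≤ b) (hc : 1 ≤ c) (hs : 1 < s.re) :
    ∑' t, Gx x p q a b c s t = Jgen x κ p q a b c s := by
  have hx : ‖x‖ = 1 := by rcases h.hx with h | h <;> simp [h]
  rw [(summable_Gx x p q a b c s hp hq ha hb hc hs hx).tsum_prod]
  simp only [tsum_fiber h p q a b c s hp hq ha hb hc hs]
  exact (hasSum_jt x κ p q a b c s hp hq ha hb hc hs hx).tsum_eq

lemma good_zeta : Good 1 (fun j => riemannZeta (2 * j)) where
  hx := Or.inl rfl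
  h0 := by simp [riemannZeta_zero]
  hk := by
    intro j hj
    have hs : Summable (fun n : ℕ => (1 : ℂ) / (n : ℂ) ^ (2 * j)) := by
      have := (Real.summable_one_div_nat_pow (p := 2 * j)).mpr (by omega)
      refine Summable.of_norm (this.congr fun n => ?_)
      simp
    have e := zeta_nat_eq_tsum_of_gt_one (k := 2 * j) (by omega)
    push_cast at e
    have h2 := hs.hasSum
    rw [← e, ← hasSum_nat_add_iff' 1] at h2
    have hj' : j ≠ 0 := by omega
    simpa [hj'] using h2

lemma alt_tsum (f g : ℕ → ℂ) (r : ℂ) (hf : Summable f) (hg : Summable g)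
    (ev : ∀ n, f (2 * n) = - g (2 * n)) (od : ∀ n, f (2 * n + 1) = g (2 * n + 1))
    (od2 : ∀ n, g (2 * n + 1) = r * g n) : ∑' n, f n = (2 * r - 1) * ∑' n, g n := by
  have i1 : Function.Injective (fun n : ℕ => 2 * n) := by intro a b; simp
  have i2 : Function.Injective (fun n : ℕ => 2 * n + 1) := by intro a b; simp
  have E := tsum_even_add_odd (f := f) (hf.comp_injective i1) (hf.comp_injective i2)
  have F := tsum_even_add_odd (f := g) (hg.comp_injective i1) (hg.comp_injective i2)
  have O : ∑' n : ℕ, g (2 * n + 1) = r * ∑' n, g n := by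
    simp only [od2]
    rw [tsum_mul_left]
  simp only [ev, od] at E
  rw [tsum_neg] at E
  rw [← E]
  linear_combination (-1) * F + 2 * O

lemma phi_hasSum (j : ℕ) (hj : 1 ≤ j) :
    HasSum (fun n : ℕ => (-1 : ℂ) ^ (n + 1) / ((n : ℂ) + 1) ^ (2 * j)) (phi (2 * j)) := by
  have hs := good_zeta.hk j hj
  simp only [one_pow] at hs
  have hsf : Summable (fun n : ℕ => (-1 : ℂ) ^ (n + 1) / ((n : ℂ) + 1) ^ (2 * j)) := by
    have := hs.summable.norm
    refine Summable.of_norm (this.congr fun n => ?_)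
    simp
  have key := alt_tsum _ _ (1 / 2 ^ (2 * j)) hsf hs.summable ?_ ?_ ?_
  · rw [hs.tsum_eq] at key
    have e : phi (2 * j) = (2 * (1 / 2 ^ (2 * j)) - 1) * riemannZeta (2 * j) := by
      unfold phi
      have h1 : (2 * (j : ℂ)) ≠ 1 := by
        intro h
        have : 2 * j = 1 := by exact_mod_cast h
        omega
      have h2 : (2 : ℂ) ^ ((1 : ℂ) - 2 * j) = 2 / 2 ^ (2 * j) := by
        rw [Complex.cpow_sub _ _ (by norm_num), Complex.cpow_one]
        congr 1
        exact_mod_cast Complex.cpow_natCast 2 (2 * j)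
      rw [if_neg h1, h2]
      ring
    rw [e, ← key]
    exact hsf.hasSum
  · intro n
    rw [pow_succ, pow_mul]
    simp [neg_div]
  · intro n
    rw [show (2 * n + 1 + 1) = 2 * (n + 1) by ring, pow_mul (-1 : ℂ)]
    simp
  · intro n
    rw [div_mul_div_comm, ← mul_pow]
    push_cast
    rw [one_mul, show (2 * (n : ℂ) + 1 + 1) = 2 * (n + 1) by ring]

lemma good_phi : Good (-1) (fun j => phi (2 * j)) where
  hx := Or.inr rfl
  h0 := by simp [phi, riemannZeta_zero]; norm_num
  hk := phi_hasSum

end pointwise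

section chambers
open Filter Topology

noncomputable def Gw (p q a b c : ℕ) (s : ℂ) (t : (ℤ × ℕ) × ℤ) : ℂ :=
  (if (t.2 - ((t.1.2 : ℤ) + 1)) % 2 = 0 then 1 else 0) / den p q a b c s t

lemma Gw_eq_half (p q a b c : ℕ) (s : ℂ) (t : (ℤ × ℕ) × ℤ) :
    Gw p q a b c s t = (1 / 2) * (Gx 1 p q a b c s t + Gx (-1) p q a b c s t) := by
  unfold Gw Gx
  rw [← add_div, ← mul_div_assoc]
  congr 1
  have h1 : (-1 : ℂ) ^ t.2 * (-1) ^ (t.1.2 + 1) = (-1) ^ (t.2 - ((t.1.2 : ℤ) + 1)) := by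
    rw [sub_eq_add_neg, zpow_add₀ (by norm_num), zpow_neg, ← inv_zpow]
    congr 1
    norm_num
    exact_mod_cast (zpow_natCast (-1 : ℂ) (t.1.2 + 1)).symm
  rw [h1]
  split_ifs with h
  · rw [Even.neg_one_zpow (Int.even_iff.mpr h)]; norm_num
  · rw [Odd.neg_one_zpow (Int.odd_iff.mpr (by omega))]; norm_num

lemma cast_sgn (z : ℤ) (i k A : ℕ) (h : z = (-1) ^ i * (A : ℤ)) :
    (z : ℂ) ^ k = (-1) ^ (i * k) * (A : ℂ) ^ (k : ℂ) := by
  rw [h, Complex.cpow_natCast, pow_mul, ← mul_pow]; push_cast; rfl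

lemma Gw_eq (p q a b c : ℕ) (s : ℂ) (m l : ℤ) (n : ℕ) (A B ν D E F : ℕ) (i₁ i₂ i₃ i₄ i₅ : ℕ)
    (h1 : l = (-1) ^ i₁ * (A : ℤ)) (h2 : m = (-1) ^ i₂ * (B : ℤ)) (h3 : l + m = (-1) ^ i₃ * (D : ℤ))
    (h4 : m + n + 1 = (-1) ^ i₄ * (E : ℤ)) (h5 : l + (m + n + 1) = (-1) ^ i₅ * (F : ℤ))
    (hν : n + 1 = ν) (k : ℕ) (hk : k = i₁ * p + i₂ * q + i₃ * a + i₄ * b + i₅ * c)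
    (w X : ℂ) (hw : w = if (l - ((n : ℤ) + 1)) % 2 = 0 then 1 else 0)
    (hX : X = (A : ℂ) ^ (p : ℂ) * (B : ℂ) ^ (q : ℂ) * (ν : ℂ) ^ s * (D : ℂ) ^ (a : ℂ) *
      (E : ℂ) ^ (b : ℂ) * (F : ℂ) ^ (c : ℂ)) :
    Gw p q a b c s ((m, n), l) = (-1) ^ k * (w / X) := by
  unfold Gw den
  simp only
  rw [cast_sgn l i₁ p A h1, cast_sgn m i₂ q B h2, cast_sgn (l + m) i₃ a D h3,
    cast_sgn (m + n + 1) i₄ b E h4, cast_sgn (l + (m + n + 1)) i₅ c F h5, hν, ← hw]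
  have e : (-1 : ℂ) ^ k * (-1) ^ k = 1 := by rw [← mul_pow]; simp
  have e2 : (-1 : ℂ) ^ k = (-1) ^ (i₁ * p) * (-1) ^ (i₂ * q) * (-1) ^ (i₃ * a) * (-1) ^ (i₄ * b) *
      (-1) ^ (i₅ * c) := by rw [hk]; simp only [pow_add]
  have e3 : ((-1 : ℂ) ^ k)⁻¹ = (-1) ^ k := by
    rw [inv_eq_iff_eq_inv]; exact eq_inv_of_mul_eq_one_left e
  rw [show (-1 : ℂ) ^ k * (w / X) = w / ((-1 : ℂ) ^ k * X) by
    rw [div_eq_mul_inv, div_eq_mul_inv, mul_inv, e3]; ring]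
  rw [hX, e2]
  congr 1
  ring

lemma chamber_hasSum (G : (ℤ × ℕ) × ℤ → ℂ) (hG : Summable G) (e : ℕ × ℕ × ℕ → (ℤ × ℕ) × ℤ)
    (hinj : Function.Injective e) (cond : (ℤ × ℕ) × ℤ → Prop) [DecidablePred cond]
    (hr : ∀ u, cond u ↔ u ∈ Set.range e) (σ : ℂ) (τ : ℕ × ℕ × ℕ → ℂ)
    (hτ : ∀ t, G (e t) = σ * τ t) :
    HasSum (fun u => if cond u then G u else 0) (σ * ∑' t, τ t) := by
  have hs : Summable (fun u => if cond u then G u else 0) := by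
    have := hG.indicator {u | cond u}
    refine this.congr fun u => ?_
    simp [Set.indicator_apply]
  have h0 : ∀ u ∉ Set.range e, (fun u => if cond u then G u else 0) u = 0 := by
    intro u hu
    have : ¬ cond u := by rw [hr]; exact hu
    simp [this]
  rw [← hinj.hasSum_iff h0]
  have hs' := (hinj.summable_iff h0).mpr hs
  have heq : ((fun u => if cond u then G u else 0) ∘ e) = fun t => σ * τ t := by
    funext t
    have : cond (e t) := by rw [hr]; exact ⟨t, rfl⟩
    simp [this, hτ]
  rw [heq] at hs' ⊢
  rw [← tsum_mul_left]
  exact hs'.hasSum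

lemma chamber1 (p q a b c : ℕ) (s : ℂ) (hG : Summable (Gw p q a b c s)) :
    HasSum (fun u : (ℤ × ℕ) × ℤ => if 0 < u.2 ∧ 0 < u.1.1 then
      Gw p q a b c s u else 0) ((-1 : ℂ) ^ (0) * ZSO6 p q s a b c) := by
  refine chamber_hasSum _ hG (fun t => ((((t.2.1 : ℤ) + 1), t.2.2), ((t.1 : ℤ) + 1)))
    ?_ (fun u => 0 < u.2 ∧ 0 < u.1.1) ?_ _ _ ?_
  · rintro ⟨x, y, z⟩ ⟨x', y', z'⟩ h
    simp only [Prod.mk.injEq] at h ⊢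
    omega
  · intro u
    constructor
    · intro h
      refine ⟨((u.2 - 1).toNat, (u.1.1 - 1).toNat, ((u.1.2 : ℤ) + 1 - 1).toNat), ?_⟩
      obtain ⟨⟨m, n⟩, l⟩ := u
      simp only [Prod.mk.injEq] at h ⊢
      omega
    · rintro ⟨t, rfl⟩
      simp only
      omega
  · intro t
    refine Gw_eq p q a b c s _ _ _ (t.1 + 1) (t.2.1 + 1)
      (t.2.2 + 1) (t.1 + 1 + (t.2.1 + 1)) (t.2.1 + 1 + (t.2.2 + 1))
      (t.1 + 1 + (t.2.1 + 1) + (t.2.2 + 1)) 0 0 0 0 0 ?_ ?_ ?_ ?_ ?_ ?_ _ ?_ _ _ ?_ ?_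
    · push_cast; ring
    · push_cast; ring
    · push_cast; ring
    · push_cast; ring
    · push_cast; ring
    · omega
    · omega
    · refine if_congr ?_ rfl rfl
      push_cast
      omega
    · ring

lemma chamber2 (p q a b c : ℕ) (s : ℂ) (hG : Summable (Gw p q a b c s)) :
    HasSum (fun u : (ℤ × ℕ) × ℤ => if u.2 < 0 ∧ 0 < u.2 + u.1.1 then
      Gw p q a b c s u else 0) ((-1 : ℂ) ^ (p) * ZSO6 p a s q c b) := by
  refine chamber_hasSum _ hG (fun t => ((((t.1 : ℤ) + 1) + ((t.2.1 : ℤ) + 1), t.2.2), -(((t.1 : ℤ) + 1))))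
    ?_ (fun u => u.2 < 0 ∧ 0 < u.2 + u.1.1) ?_ _ _ ?_
  · rintro ⟨x, y, z⟩ ⟨x', y', z'⟩ h
    simp only [Prod.mk.injEq] at h ⊢
    omega
  · intro u
    constructor
    · intro h
      refine ⟨((-(u.2) - 1).toNat, (u.2 + u.1.1 - 1).toNat, ((u.1.2 : ℤ) + 1 - 1).toNat), ?_⟩
      obtain ⟨⟨m, n⟩, l⟩ := u
      simp only [Prod.mk.injEq] at h ⊢
      omega
    · rintro ⟨t, rfl⟩
      simp only
      omega
  · intro t
    refine Gw_eq p q a b c s _ _ _ (t.1 + 1) (t.1 + 1 + (t.2.1 + 1))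
      (t.2.2 + 1) (t.2.1 + 1) (t.1 + 1 + (t.2.1 + 1) + (t.2.2 + 1))
      (t.2.1 + 1 + (t.2.2 + 1)) 1 0 0 0 0 ?_ ?_ ?_ ?_ ?_ ?_ _ ?_ _ _ ?_ ?_
    · push_cast; ring
    · push_cast; ring
    · push_cast; ring
    · push_cast; ring
    · push_cast; ring
    · omega
    · omega
    · refine if_congr ?_ rfl rfl
      push_cast
      omega
    · ring

lemma chamber3 (p q a b c : ℕ) (s : ℂ) (hG : Summable (Gw p q a b c s)) :
    HasSum (fun u : (ℤ × ℕ) × ℤ => if 0 < u.1.1 ∧ u.2 + u.1.1 < 0 ∧ 0 < u.2 + (u.1.1 + u.1.2 + 1) then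
      Gw p q a b c s u else 0) ((-1 : ℂ) ^ (p + a) * ZSO6 q a c p s b) := by
  refine chamber_hasSum _ hG (fun t => ((((t.1 : ℤ) + 1), t.2.1 + t.2.2 + 1), -(((t.1 : ℤ) + 1) + ((t.2.1 : ℤ) + 1))))
    ?_ (fun u => 0 < u.1.1 ∧ u.2 + u.1.1 < 0 ∧ 0 < u.2 + (u.1.1 + u.1.2 + 1)) ?_ _ _ ?_
  · rintro ⟨x, y, z⟩ ⟨x', y', z'⟩ h
    simp only [Prod.mk.injEq] at h ⊢
    omega
  · intro u
    constructor
    · intro h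
      refine ⟨((u.1.1 - 1).toNat, (-(u.2 + u.1.1) - 1).toNat, (u.2 + (u.1.1 + u.1.2 + 1) - 1).toNat), ?_⟩
      obtain ⟨⟨m, n⟩, l⟩ := u
      simp only [Prod.mk.injEq] at h ⊢
      omega
    · rintro ⟨t, rfl⟩
      simp only
      omega
  · intro t
    refine Gw_eq p q a b c s _ _ _ (t.1 + 1 + (t.2.1 + 1)) (t.1 + 1)
      (t.2.1 + 1 + (t.2.2 + 1)) (t.2.1 + 1) (t.1 + 1 + (t.2.1 + 1) + (t.2.2 + 1))
      (t.2.2 + 1) 1 0 1 0 0 ?_ ?_ ?_ ?_ ?_ ?_ _ ?_ _ _ ?_ ?_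
    · push_cast; ring
    · push_cast; ring
    · push_cast; ring
    · push_cast; ring
    · push_cast; ring
    · omega
    · omega
    · refine if_congr ?_ rfl rfl
      push_cast
      omega
    · ring

lemma chamber4 (p q a b c : ℕ) (s : ℂ) (hG : Summable (Gw p q a b c s)) :
    HasSum (fun u : (ℤ × ℕ) × ℤ => if 0 < u.1.1 ∧ u.2 + (u.1.1 + u.1.2 + 1) < 0 then
      Gw p q a b c s u else 0) ((-1 : ℂ) ^ (p + a + c) * ZSO6 q s c b a p) := by
  refine chamber_hasSum _ hG (fun t => ((((t.1 : ℤ) + 1), t.2.1), -(((t.1 : ℤ) + 1) + ((t.2.1 : ℤ) + 1) + ((t.2.2 : ℤ) + 1))))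
    ?_ (fun u => 0 < u.1.1 ∧ u.2 + (u.1.1 + u.1.2 + 1) < 0) ?_ _ _ ?_
  · rintro ⟨x, y, z⟩ ⟨x', y', z'⟩ h
    simp only [Prod.mk.injEq] at h ⊢
    omega
  · intro u
    constructor
    · intro h
      refine ⟨((u.1.1 - 1).toNat, ((u.1.2 : ℤ) + 1 - 1).toNat, (-(u.2 + (u.1.1 + u.1.2 + 1)) - 1).toNat), ?_⟩
      obtain ⟨⟨m, n⟩, l⟩ := u
      simp only [Prod.mk.injEq] at h ⊢
      omega
    · rintro ⟨t, rfl⟩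
      simp only
      omega
  · intro t
    refine Gw_eq p q a b c s _ _ _ (t.1 + 1 + (t.2.1 + 1) + (t.2.2 + 1)) (t.1 + 1)
      (t.2.1 + 1) (t.2.1 + 1 + (t.2.2 + 1)) (t.1 + 1 + (t.2.1 + 1))
      (t.2.2 + 1) 1 0 1 0 1 ?_ ?_ ?_ ?_ ?_ ?_ _ ?_ _ _ ?_ ?_
    · push_cast; ring
    · push_cast; ring
    · push_cast; ring
    · push_cast; ring
    · push_cast; ring
    · omega
    · omega
    · refine if_congr ?_ rfl rfl
      push_cast
      omega
    · ring

lemma chamber5 (p q a b c : ℕ) (s : ℂ) (hG : Summable (Gw p q a b c s)) :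
    HasSum (fun u : (ℤ × ℕ) × ℤ => if 0 < u.2 + u.1.1 ∧ u.1.1 < 0 ∧ 0 < u.1.1 + u.1.2 + 1 then
      Gw p q a b c s u else 0) ((-1 : ℂ) ^ (q) * ZSO6 a q b p s c) := by
  refine chamber_hasSum _ hG (fun t => ((-(((t.2.1 : ℤ) + 1)), t.2.1 + t.2.2 + 1), ((t.1 : ℤ) + 1) + ((t.2.1 : ℤ) + 1)))
    ?_ (fun u => 0 < u.2 + u.1.1 ∧ u.1.1 < 0 ∧ 0 < u.1.1 + u.1.2 + 1) ?_ _ _ ?_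
  · rintro ⟨x, y, z⟩ ⟨x', y', z'⟩ h
    simp only [Prod.mk.injEq] at h ⊢
    omega
  · intro u
    constructor
    · intro h
      refine ⟨((u.2 + u.1.1 - 1).toNat, (-(u.1.1) - 1).toNat, (u.1.1 + u.1.2 + 1 - 1).toNat), ?_⟩
      obtain ⟨⟨m, n⟩, l⟩ := u
      simp only [Prod.mk.injEq] at h ⊢
      omega
    · rintro ⟨t, rfl⟩
      simp only
      omega
  · intro t
    refine Gw_eq p q a b c s _ _ _ (t.1 + 1 + (t.2.1 + 1)) (t.2.1 + 1)
      (t.2.1 + 1 + (t.2.2 + 1)) (t.1 + 1) (t.2.2 + 1)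
      (t.1 + 1 + (t.2.1 + 1) + (t.2.2 + 1)) 0 1 0 0 0 ?_ ?_ ?_ ?_ ?_ ?_ _ ?_ _ _ ?_ ?_
    · push_cast; ring
    · push_cast; ring
    · push_cast; ring
    · push_cast; ring
    · push_cast; ring
    · omega
    · omega
    · refine if_congr ?_ rfl rfl
      push_cast
      omega
    · ring

lemma chamber6 (p q a b c : ℕ) (s : ℂ) (hG : Summable (Gw p q a b c s)) :
    HasSum (fun u : (ℤ × ℕ) × ℤ => if 0 < u.2 + u.1.1 ∧ u.1.1 + u.1.2 + 1 < 0 then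
      Gw p q a b c s u else 0) ((-1 : ℂ) ^ (q + b) * ZSO6 a s b c q p) := by
  refine chamber_hasSum _ hG (fun t => ((-(((t.2.1 : ℤ) + 1) + ((t.2.2 : ℤ) + 1)), t.2.1), ((t.1 : ℤ) + 1) + ((t.2.1 : ℤ) + 1) + ((t.2.2 : ℤ) + 1)))
    ?_ (fun u => 0 < u.2 + u.1.1 ∧ u.1.1 + u.1.2 + 1 < 0) ?_ _ _ ?_
  · rintro ⟨x, y, z⟩ ⟨x', y', z'⟩ h
    simp only [Prod.mk.injEq] at h ⊢
    omega
  · intro u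
    constructor
    · intro h
      refine ⟨((u.2 + u.1.1 - 1).toNat, ((u.1.2 : ℤ) + 1 - 1).toNat, (-(u.1.1 + u.1.2 + 1) - 1).toNat), ?_⟩
      obtain ⟨⟨m, n⟩, l⟩ := u
      simp only [Prod.mk.injEq] at h ⊢
      omega
    · rintro ⟨t, rfl⟩
      simp only
      omega
  · intro t
    refine Gw_eq p q a b c s _ _ _ (t.1 + 1 + (t.2.1 + 1) + (t.2.2 + 1)) (t.2.1 + 1 + (t.2.2 + 1))
      (t.2.1 + 1) (t.1 + 1) (t.2.2 + 1)
      (t.1 + 1 + (t.2.1 + 1)) 0 1 0 1 0 ?_ ?_ ?_ ?_ ?_ ?_ _ ?_ _ _ ?_ ?_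
    · push_cast; ring
    · push_cast; ring
    · push_cast; ring
    · push_cast; ring
    · push_cast; ring
    · omega
    · omega
    · refine if_congr ?_ rfl rfl
      push_cast
      omega
    · ring

lemma chamber7 (p q a b c : ℕ) (s : ℂ) (hG : Summable (Gw p q a b c s)) :
    HasSum (fun u : (ℤ × ℕ) × ℤ => if u.2 + u.1.1 < 0 ∧ 0 < u.2 ∧ 0 < u.1.1 + u.1.2 + 1 then
      Gw p q a b c s u else 0) ((-1 : ℂ) ^ (q + a) * ZSO6 a p b q c s) := by
  refine chamber_hasSum _ hG (fun t => ((-(((t.1 : ℤ) + 1) + ((t.2.1 : ℤ) + 1)), t.1 + t.2.1 + t.2.2 + 2), ((t.2.1 : ℤ) + 1)))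
    ?_ (fun u => u.2 + u.1.1 < 0 ∧ 0 < u.2 ∧ 0 < u.1.1 + u.1.2 + 1) ?_ _ _ ?_
  · rintro ⟨x, y, z⟩ ⟨x', y', z'⟩ h
    simp only [Prod.mk.injEq] at h ⊢
    omega
  · intro u
    constructor
    · intro h
      refine ⟨((-(u.2 + u.1.1) - 1).toNat, (u.2 - 1).toNat, (u.1.1 + u.1.2 + 1 - 1).toNat), ?_⟩
      obtain ⟨⟨m, n⟩, l⟩ := u
      simp only [Prod.mk.injEq] at h ⊢
      omega
    · rintro ⟨t, rfl⟩
      simp only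
      omega
  · intro t
    refine Gw_eq p q a b c s _ _ _ (t.2.1 + 1) (t.1 + 1 + (t.2.1 + 1))
      (t.1 + 1 + (t.2.1 + 1) + (t.2.2 + 1)) (t.1 + 1) (t.2.2 + 1)
      (t.2.1 + 1 + (t.2.2 + 1)) 0 1 1 0 0 ?_ ?_ ?_ ?_ ?_ ?_ _ ?_ _ _ ?_ ?_
    · push_cast; ring
    · push_cast; ring
    · push_cast; ring
    · push_cast; ring
    · push_cast; ring
    · omega
    · omega
    · refine if_congr ?_ rfl rfl
      push_cast
      omega
    · ring

lemma chamber8 (p q a b c : ℕ) (s : ℂ) (hG : Summable (Gw p q a b c s)) :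
    HasSum (fun u : (ℤ × ℕ) × ℤ => if u.2 + u.1.1 < 0 ∧ 0 < u.2 + (u.1.1 + u.1.2 + 1) ∧ u.1.1 + u.1.2 + 1 < 0 then
      Gw p q a b c s u else 0) ((-1 : ℂ) ^ (q + a + b) * ZSO6 a c b s p q) := by
  refine chamber_hasSum _ hG (fun t => ((-(((t.1 : ℤ) + 1) + ((t.2.1 : ℤ) + 1) + ((t.2.2 : ℤ) + 1)), t.1 + t.2.1 + 1), ((t.2.1 : ℤ) + 1) + ((t.2.2 : ℤ) + 1)))
    ?_ (fun u => u.2 + u.1.1 < 0 ∧ 0 < u.2 + (u.1.1 + u.1.2 + 1) ∧ u.1.1 + u.1.2 + 1 < 0) ?_ _ _ ?_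
  · rintro ⟨x, y, z⟩ ⟨x', y', z'⟩ h
    simp only [Prod.mk.injEq] at h ⊢
    omega
  · intro u
    constructor
    · intro h
      refine ⟨((-(u.2 + u.1.1) - 1).toNat, (u.2 + (u.1.1 + u.1.2 + 1) - 1).toNat, (-(u.1.1 + u.1.2 + 1) - 1).toNat), ?_⟩
      obtain ⟨⟨m, n⟩, l⟩ := u
      simp only [Prod.mk.injEq] at h ⊢
      omega
    · rintro ⟨t, rfl⟩
      simp only
      omega
  · intro t
    refine Gw_eq p q a b c s _ _ _ (t.2.1 + 1 + (t.2.2 + 1)) (t.1 + 1 + (t.2.1 + 1) + (t.2.2 + 1))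
      (t.1 + 1 + (t.2.1 + 1)) (t.1 + 1) (t.2.2 + 1)
      (t.2.1 + 1) 0 1 1 1 0 ?_ ?_ ?_ ?_ ?_ ?_ _ ?_ _ _ ?_ ?_
    · push_cast; ring
    · push_cast; ring
    · push_cast; ring
    · push_cast; ring
    · push_cast; ring
    · omega
    · omega
    · refine if_congr ?_ rfl rfl
      push_cast
      omega
    · ring

lemma chamber9 (p q a b c : ℕ) (s : ℂ) (hG : Summable (Gw p q a b c s)) :
    HasSum (fun u : (ℤ × ℕ) × ℤ => if u.2 + (u.1.1 + u.1.2 + 1) < 0 ∧ 0 < u.2 then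
      Gw p q a b c s u else 0) ((-1 : ℂ) ^ (q + a + b + c) * ZSO6 s c p a b q) := by
  refine chamber_hasSum _ hG (fun t => ((-(((t.1 : ℤ) + 1) + ((t.2.1 : ℤ) + 1) + ((t.2.2 : ℤ) + 1)), t.1), ((t.2.2 : ℤ) + 1)))
    ?_ (fun u => u.2 + (u.1.1 + u.1.2 + 1) < 0 ∧ 0 < u.2) ?_ _ _ ?_
  · rintro ⟨x, y, z⟩ ⟨x', y', z'⟩ h
    simp only [Prod.mk.injEq] at h ⊢
    omega
  · intro u
    constructor
    · intro h
      refine ⟨(((u.1.2 : ℤ) + 1 - 1).toNat, (-(u.2 + (u.1.1 + u.1.2 + 1)) - 1).toNat, (u.2 - 1).toNat), ?_⟩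
      obtain ⟨⟨m, n⟩, l⟩ := u
      simp only [Prod.mk.injEq] at h ⊢
      omega
    · rintro ⟨t, rfl⟩
      simp only
      omega
  · intro t
    refine Gw_eq p q a b c s _ _ _ (t.2.2 + 1) (t.1 + 1 + (t.2.1 + 1) + (t.2.2 + 1))
      (t.1 + 1) (t.1 + 1 + (t.2.1 + 1)) (t.2.1 + 1 + (t.2.2 + 1))
      (t.2.1 + 1) 0 1 1 1 1 ?_ ?_ ?_ ?_ ?_ ?_ _ ?_ _ _ ?_ ?_
    · push_cast; ring
    · push_cast; ring
    · push_cast; ring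
    · push_cast; ring
    · push_cast; ring
    · omega
    · omega
    · refine if_congr ?_ rfl rfl
      push_cast
      omega
    · ring

lemma chamber10 (p q a b c : ℕ) (s : ℂ) (hG : Summable (Gw p q a b c s)) :
    HasSum (fun u : (ℤ × ℕ) × ℤ => if u.1.1 < 0 ∧ u.2 < 0 ∧ 0 < u.2 + (u.1.1 + u.1.2 + 1) then
      Gw p q a b c s u else 0) ((-1 : ℂ) ^ (p + q + a) * ZSO6 q p c a b s) := by
  refine chamber_hasSum _ hG (fun t => ((-(((t.1 : ℤ) + 1)), t.1 + t.2.1 + t.2.2 + 2), -(((t.2.1 : ℤ) + 1))))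
    ?_ (fun u => u.1.1 < 0 ∧ u.2 < 0 ∧ 0 < u.2 + (u.1.1 + u.1.2 + 1)) ?_ _ _ ?_
  · rintro ⟨x, y, z⟩ ⟨x', y', z'⟩ h
    simp only [Prod.mk.injEq] at h ⊢
    omega
  · intro u
    constructor
    · intro h
      refine ⟨((-(u.1.1) - 1).toNat, (-(u.2) - 1).toNat, (u.2 + (u.1.1 + u.1.2 + 1) - 1).toNat), ?_⟩
      obtain ⟨⟨m, n⟩, l⟩ := u
      simp only [Prod.mk.injEq] at h ⊢
      omega
    · rintro ⟨t, rfl⟩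
      simp only
      omega
  · intro t
    refine Gw_eq p q a b c s _ _ _ (t.2.1 + 1) (t.1 + 1)
      (t.1 + 1 + (t.2.1 + 1) + (t.2.2 + 1)) (t.1 + 1 + (t.2.1 + 1)) (t.2.1 + 1 + (t.2.2 + 1))
      (t.2.2 + 1) 1 1 1 0 0 ?_ ?_ ?_ ?_ ?_ ?_ _ ?_ _ _ ?_ ?_
    · push_cast; ring
    · push_cast; ring
    · push_cast; ring
    · push_cast; ring
    · push_cast; ring
    · omega
    · omega
    · refine if_congr ?_ rfl rfl
      push_cast
      omega
    · ring

lemma chamber11 (p q a b c : ℕ) (s : ℂ) (hG : Summable (Gw p q a b c s)) :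
    HasSum (fun u : (ℤ × ℕ) × ℤ => if u.1.1 < 0 ∧ 0 < u.1.1 + u.1.2 + 1 ∧ u.2 + (u.1.1 + u.1.2 + 1) < 0 then
      Gw p q a b c s u else 0) ((-1 : ℂ) ^ (p + q + a + c) * ZSO6 q b c s p a) := by
  refine chamber_hasSum _ hG (fun t => ((-(((t.1 : ℤ) + 1)), t.1 + t.2.1 + 1), -(((t.2.1 : ℤ) + 1) + ((t.2.2 : ℤ) + 1))))
    ?_ (fun u => u.1.1 < 0 ∧ 0 < u.1.1 + u.1.2 + 1 ∧ u.2 + (u.1.1 + u.1.2 + 1) < 0) ?_ _ _ ?_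
  · rintro ⟨x, y, z⟩ ⟨x', y', z'⟩ h
    simp only [Prod.mk.injEq] at h ⊢
    omega
  · intro u
    constructor
    · intro h
      refine ⟨((-(u.1.1) - 1).toNat, (u.1.1 + u.1.2 + 1 - 1).toNat, (-(u.2 + (u.1.1 + u.1.2 + 1)) - 1).toNat), ?_⟩
      obtain ⟨⟨m, n⟩, l⟩ := u
      simp only [Prod.mk.injEq] at h ⊢
      omega
    · rintro ⟨t, rfl⟩
      simp only
      omega
  · intro t
    refine Gw_eq p q a b c s _ _ _ (t.2.1 + 1 + (t.2.2 + 1)) (t.1 + 1)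
      (t.1 + 1 + (t.2.1 + 1)) (t.1 + 1 + (t.2.1 + 1) + (t.2.2 + 1)) (t.2.1 + 1)
      (t.2.2 + 1) 1 1 1 0 1 ?_ ?_ ?_ ?_ ?_ ?_ _ ?_ _ _ ?_ ?_
    · push_cast; ring
    · push_cast; ring
    · push_cast; ring
    · push_cast; ring
    · push_cast; ring
    · omega
    · omega
    · refine if_congr ?_ rfl rfl
      push_cast
      omega
    · ring

lemma chamber12 (p q a b c : ℕ) (s : ℂ) (hG : Summable (Gw p q a b c s)) :
    HasSum (fun u : (ℤ × ℕ) × ℤ => if u.1.1 + u.1.2 + 1 < 0 ∧ u.2 < 0 then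
      Gw p q a b c s u else 0) ((-1 : ℂ) ^ (p + q + a + b + c) * ZSO6 s b p q c a) := by
  refine chamber_hasSum _ hG (fun t => ((-(((t.1 : ℤ) + 1) + ((t.2.1 : ℤ) + 1)), t.1), -(((t.2.2 : ℤ) + 1))))
    ?_ (fun u => u.1.1 + u.1.2 + 1 < 0 ∧ u.2 < 0) ?_ _ _ ?_
  · rintro ⟨x, y, z⟩ ⟨x', y', z'⟩ h
    simp only [Prod.mk.injEq] at h ⊢
    omega
  · intro u
    constructor
    · intro h
      refine ⟨(((u.1.2 : ℤ) + 1 - 1).toNat, (-(u.1.1 + u.1.2 + 1) - 1).toNat, (-(u.2) - 1).toNat), ?_⟩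
      obtain ⟨⟨m, n⟩, l⟩ := u
      simp only [Prod.mk.injEq] at h ⊢
      omega
    · rintro ⟨t, rfl⟩
      simp only
      omega
  · intro t
    refine Gw_eq p q a b c s _ _ _ (t.2.2 + 1) (t.1 + 1 + (t.2.1 + 1))
      (t.1 + 1) (t.1 + 1 + (t.2.1 + 1) + (t.2.2 + 1)) (t.2.1 + 1)
      (t.2.1 + 1 + (t.2.2 + 1)) 1 1 1 1 1 ?_ ?_ ?_ ?_ ?_ ?_ _ ?_ _ _ ?_ ?_
    · push_cast; ring
    · push_cast; ring
    · push_cast; ring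
    · push_cast; ring
    · push_cast; ring
    · omega
    · omega
    · refine if_congr ?_ rfl rfl
      push_cast
      omega
    · ring

lemma indicator_sum (p q a b c : ℕ) (s : ℂ) (hp : 1 ≤ p) (hq : 1 ≤ q) (ha : 1 ≤ a) (hb : 1 ≤ b)
    (hc : 1 ≤ c) (u : (ℤ × ℕ) × ℤ) :
    (if 0 < u.2 ∧ 0 < u.1.1 then Gw p q a b c s u else 0) +
    (if u.2 < 0 ∧ 0 < u.2 + u.1.1 then Gw p q a b c s u else 0) +
    (if 0 < u.1.1 ∧ u.2 + u.1.1 < 0 ∧ 0 < u.2 + (u.1.1 + u.1.2 + 1) then Gw p q a b c s u else 0) +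
    (if 0 < u.1.1 ∧ u.2 + (u.1.1 + u.1.2 + 1) < 0 then Gw p q a b c s u else 0) +
    (if 0 < u.2 + u.1.1 ∧ u.1.1 < 0 ∧ 0 < u.1.1 + u.1.2 + 1 then Gw p q a b c s u else 0) +
    (if 0 < u.2 + u.1.1 ∧ u.1.1 + u.1.2 + 1 < 0 then Gw p q a b c s u else 0) +
    (if u.2 + u.1.1 < 0 ∧ 0 < u.2 ∧ 0 < u.1.1 + u.1.2 + 1 then Gw p q a b c s u else 0) +
    (if u.2 + u.1.1 < 0 ∧ 0 < u.2 + (u.1.1 + u.1.2 + 1) ∧ u.1.1 + u.1.2 + 1 < 0 then Gw p q a b c s u else 0) +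
    (if u.2 + (u.1.1 + u.1.2 + 1) < 0 ∧ 0 < u.2 then Gw p q a b c s u else 0) +
    (if u.1.1 < 0 ∧ u.2 < 0 ∧ 0 < u.2 + (u.1.1 + u.1.2 + 1) then Gw p q a b c s u else 0) +
    (if u.1.1 < 0 ∧ 0 < u.1.1 + u.1.2 + 1 ∧ u.2 + (u.1.1 + u.1.2 + 1) < 0 then Gw p q a b c s u else 0) +
    (if u.1.1 + u.1.2 + 1 < 0 ∧ u.2 < 0 then Gw p q a b c s u else 0) =
    Gw p q a b c s u := by
  by_cases hw : u.2 = 0 ∨ u.1.1 = 0 ∨ u.2 + u.1.1 = 0 ∨ u.1.1 + u.1.2 + 1 = 0 ∨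
      u.2 + (u.1.1 + u.1.2 + 1) = 0
  · have h0 : Gw p q a b c s u = 0 := by
      unfold Gw den
      have n1 : p ≠ 0 := by omega
      have n2 : q ≠ 0 := by omega
      have n3 : a ≠ 0 := by omega
      have n4 : b ≠ 0 := by omega
      have n5 : c ≠ 0 := by omega
      rcases hw with h | h | h | h | h <;> rw [h] <;> simp [n1, n2, n3, n4, n5]
    simp [h0]
  · push Not at hw
    obtain ⟨w1, w2, w3, w4, w5⟩ := hw
    generalize Gw p q a b c s u = g
    rcases lt_or_gt_of_ne w1 with a1 | a1 <;> rcases lt_or_gt_of_ne w2 with a2 | a2 <;>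
    rcases lt_or_gt_of_ne w3 with a3 | a3 <;> rcases lt_or_gt_of_ne w4 with a4 | a4 <;>
    rcases lt_or_gt_of_ne w5 with a5 | a5 <;>
    first
    | (exfalso; omega)
    | simp only [a1, a2, a3, a4, a5, a1.not_gt, a2.not_gt, a3.not_gt, a4.not_gt, a5.not_gt,
        and_true, true_and, and_false, false_and, and_self, if_true, if_false, add_zero, zero_add]

end chambers

/-- Functional relation for `ζ₃(·;SO(6))`
(Theorem 6.1 of Komori–Matsumoto–Tsumura). -/
theorem functional_relation_SO6 (p q a b c : ℕ) (hp : 0 < p) (hq : 0 < q) (ha : 0 < a)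
    (hb : 0 < b) (hc : 0 < c) (s : ℂ) (hs : 1 < s.re) :
    Scomb ZSO6 p q a b c s = (1 / 2) * (J0 p q a b c s + J2 p q a b c s) := by
  have s1 := summable_Gx 1 p q a b c s hp hq ha hb hc hs (by simp)
  have s2 := summable_Gx (-1) p q a b c s hp hq ha hb hc hs (by simp)
  have hG : Summable (Gw p q a b c s) :=
    ((s1.add s2).mul_left (1 / 2)).congr fun t => (Gw_eq_half p q a b c s t).symm
  have e1 : ∑' t, Gw p q a b c s t = (1 / 2) * (J0 p q a b c s + J2 p q a b c s) := by
    rw [tsum_congr (Gw_eq_half p q a b c s), tsum_mul_left, s1.tsum_add s2,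
      tsum_Gx good_zeta p q a b c s hp hq ha hb hc hs,
      tsum_Gx good_phi p q a b c s hp hq ha hb hc hs]
    rfl
  have hS := (((((((((((chamber1 p q a b c s hG).add (chamber2 p q a b c s hG)).add
    (chamber3 p q a b c s hG)).add
    (chamber4 p q a b c s hG)).add
    (chamber5 p q a b c s hG)).add
    (chamber6 p q a b c s hG)).add
    (chamber7 p q a b c s hG)).add
    (chamber8 p q a b c s hG)).add
    (chamber9 p q a b c s hG)).add
    (chamber10 p q a b c s hG)).add
    (chamber11 p q a b c s hG)).add
    (chamber12 p q a b c s hG)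
  have hS2 : HasSum (Gw p q a b c s) (Scomb ZSO6 p q a b c s) := by
    have hf := funext (indicator_sum p q a b c s hp hq ha hb hc)
    rw [pow_zero, one_mul] at hS
    exact hf ▸ hS
  rw [← e1, hS2.tsum_eq]
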